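/- arXiv:2007.10968 — 6 statements merged into one kernel-verified Lean document; each statement's English description precedes it below -/
import Mathlib

section
/- Let ε > 0 and let (u, A) be a periodic configuration that is a solution of the Yang–Mills–Higgs equations and is stable. If u is not identically zero, then (u, A) satisfies the vortex equations (σ₊ ≡ 0 and F ≡ h on ℝ²) or the anti-vortex equations (σ₋ ≡ 0 and F ≡ −h on ℝ²). (Main Theorem, case of the flat torus with trivial bundle.) -/
open MeasureTheory Complex

noncomputable section

/-- Partial derivative in the first coordinate direction. -/
def pd1 {E : Type*} [NormedAddCommGroup E] [NormedSpace ℝ E] (f : ℝ × ℝ → E) (x : ℝ × ℝ) : E :=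
  fderiv ℝ f x (1, 0)

/-- Partial derivative in the second coordinate direction. -/
def pd2 {E : Type*} [NormedAddCommGroup E] [NormedSpace ℝ E] (f : ℝ × ℝ → E) (x : ℝ × ℝ) : E :=
  fderiv ℝ f x (0, 1)

/-- First covariant derivative `D₁f = ∂₁f − iA₁f`. -/
def D1 (A1 : ℝ × ℝ → ℝ) (f : ℝ × ℝ → ℂ) (x : ℝ × ℝ) : ℂ :=
  pd1 f x - Complex.I * (A1 x) * f x

/-- Second covariant derivative `D₂f = ∂₂f − iA₂f`. -/
def D2 (A2 : ℝ × ℝ → ℝ) (f : ℝ × ℝ → ℂ) (x : ℝ × ℝ) : ℂ :=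
  pd2 f x - Complex.I * (A2 x) * f x

/-- Curvature function `F = ∂₁A₂ − ∂₂A₁`. -/
def curv (A1 A2 : ℝ × ℝ → ℝ) (x : ℝ × ℝ) : ℝ := pd1 A2 x - pd2 A1 x

/-- `h = (1 − |u|²)/(2ε²)`. -/
def hfun (ε : ℝ) (u : ℝ × ℝ → ℂ) (x : ℝ × ℝ) : ℝ := (1 - ‖u x‖ ^ 2) / (2 * ε ^ 2)

/-- `σ₊ = D₁u + iD₂u`. -/
def sigP (u : ℝ × ℝ → ℂ) (A1 A2 : ℝ × ℝ → ℝ) (x : ℝ × ℝ) : ℂ :=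
  D1 A1 u x + Complex.I * D2 A2 u x

/-- `σ₋ = D₁u − iD₂u`. -/
def sigM (u : ℝ × ℝ → ℂ) (A1 A2 : ℝ × ℝ → ℝ) (x : ℝ × ℝ) : ℂ :=
  D1 A1 u x - Complex.I * D2 A2 u x

/-- The Yang--Mills--Higgs energy over the fundamental domain `[0,1]²`. -/
def energy (ε : ℝ) (u : ℝ × ℝ → ℂ) (A1 A2 : ℝ × ℝ → ℝ) : ℝ :=
  ∫ x in Set.Icc (0:ℝ) 1 ×ˢ Set.Icc (0:ℝ) 1,
    (ε ^ 2 * curv A1 A2 x ^ 2 + ‖D1 A1 u x‖ ^ 2 + ‖D2 A2 u x‖ ^ 2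
      + (1 - ‖u x‖ ^ 2) ^ 2 / (4 * ε ^ 2))

/-- `ℤ²`-periodicity. -/
def Periodic2 {E : Type*} (f : ℝ × ℝ → E) : Prop :=
  ∀ x : ℝ × ℝ, f (x.1 + 1, x.2) = f x ∧ f (x.1, x.2 + 1) = f x

/-- The Yang--Mills--Higgs equations on all of `ℝ²`. -/
def IsYMH (ε : ℝ) (u : ℝ × ℝ → ℂ) (A1 A2 : ℝ × ℝ → ℝ) : Prop :=
  (∀ x, -(D1 A1 (D1 A1 u) x + D2 A2 (D2 A2 u) x) = (hfun ε u x : ℂ) * u x) ∧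
  (∀ x, ε ^ 2 * pd2 (curv A1 A2) x = ((starRingEnd ℂ) (u x) * D1 A1 u x).im) ∧
  (∀ x, ε ^ 2 * pd1 (curv A1 A2) x = -((starRingEnd ℂ) (u x) * D2 A2 u x).im)

/-- The Yang--Mills--Higgs equations on an open set `U ⊆ ℝ²`. -/
def IsYMHOn (ε : ℝ) (u : ℝ × ℝ → ℂ) (A1 A2 : ℝ × ℝ → ℝ) (U : Set (ℝ × ℝ)) : Prop :=
  (∀ x ∈ U, -(D1 A1 (D1 A1 u) x + D2 A2 (D2 A2 u) x) = (hfun ε u x : ℂ) * u x) ∧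
  (∀ x ∈ U, ε ^ 2 * pd2 (curv A1 A2) x = ((starRingEnd ℂ) (u x) * D1 A1 u x).im) ∧
  (∀ x ∈ U, ε ^ 2 * pd1 (curv A1 A2) x = -((starRingEnd ℂ) (u x) * D2 A2 u x).im)

/-- Stability: nonnegative second variation of the energy along all smooth periodic
variations of the section and the connection. -/
def Stable (ε : ℝ) (u : ℝ × ℝ → ℂ) (A1 A2 : ℝ × ℝ → ℝ) : Prop :=
  ∀ v : ℝ × ℝ → ℂ, ∀ a1 a2 : ℝ × ℝ → ℝ,
    ContDiff ℝ (⊤ : ℕ∞) v → Periodic2 v → ContDiff ℝ (⊤ : ℕ∞) a1 → Periodic2 a1 →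
    ContDiff ℝ (⊤ : ℕ∞) a2 → Periodic2 a2 →
    0 ≤ iteratedDeriv 2 (fun t : ℝ =>
      energy ε (fun x => u x + t • v x)
        (fun x => A1 x + t * a1 x) (fun x => A2 x + t * a2 x)) 0

/-- directional derivative -/
def pdv {E : Type*} [NormedAddCommGroup E] [NormedSpace ℝ E] (e : ℝ × ℝ) (f : ℝ × ℝ → E)
    (x : ℝ × ℝ) : E := fderiv ℝ f x e

lemma pd1_eq {E : Type*} [NormedAddCommGroup E] [NormedSpace ℝ E] (f : ℝ × ℝ → E) :
    pd1 f = pdv (1, 0) f := rfl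

lemma pd2_eq {E : Type*} [NormedAddCommGroup E] [NormedSpace ℝ E] (f : ℝ × ℝ → E) :
    pd2 f = pdv (0, 1) f := rfl

section pdv
variable {E : Type*} [NormedAddCommGroup E] [NormedSpace ℝ E] (e : ℝ × ℝ)

lemma pdv_smooth {f : ℝ × ℝ → E} (hf : ContDiff ℝ (⊤ : ℕ∞) f) :
    ContDiff ℝ (⊤ : ℕ∞) (pdv e f) := by
  unfold pdv
  exact (hf.fderiv_right (m := (⊤ : ℕ∞)) (by simp)).clm_apply contDiff_const

lemma smooth_diff {f : ℝ × ℝ → E} (hf : ContDiff ℝ (⊤ : ℕ∞) f) : Differentiable ℝ f :=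
  hf.differentiable (by simp)

lemma pdv_periodic {f : ℝ × ℝ → E} (hf : Periodic2 f) : Periodic2 (pdv e f) := by
  intro x
  have h1 : (fun y : ℝ × ℝ => f (y + (1, 0))) = f := by
    funext y
    have := (hf y).1
    simpa [Prod.add_def] using this
  have h2 : (fun y : ℝ × ℝ => f (y + (0, 1))) = f := by
    funext y
    have := (hf y).2
    simpa [Prod.add_def] using this
  have k1 := fderiv_comp_add_right (𝕜 := ℝ) (f := f) (x := x) (1, 0)
  have k2 := fderiv_comp_add_right (𝕜 := ℝ) (f := f) (x := x) (0, 1)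
  rw [h1] at k1
  rw [h2] at k2
  unfold pdv
  constructor
  · have : (x.1 + 1, x.2) = x + (1, 0) := by ext <;> simp
    rw [this, ← k1]
  · have : (x.1, x.2 + 1) = x + (0, 1) := by ext <;> simp
    rw [this, ← k2]

lemma pdv_add {f g : ℝ × ℝ → E} (hf : ContDiff ℝ (⊤ : ℕ∞) f) (hg : ContDiff ℝ (⊤ : ℕ∞) g)
    (x : ℝ × ℝ) : pdv e (fun y => f y + g y) x = pdv e f x + pdv e g x := by
  unfold pdv
  rw [fderiv_fun_add (smooth_diff hf x) (smooth_diff hg x)]; rfl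

lemma pdv_sub {f g : ℝ × ℝ → E} (hf : ContDiff ℝ (⊤ : ℕ∞) f) (hg : ContDiff ℝ (⊤ : ℕ∞) g)
    (x : ℝ × ℝ) : pdv e (fun y => f y - g y) x = pdv e f x - pdv e g x := by
  unfold pdv
  rw [fderiv_fun_sub (smooth_diff hf x) (smooth_diff hg x)]; rfl

lemma pdv_neg (f : ℝ × ℝ → E)
    (x : ℝ × ℝ) : pdv e (fun y => - f y) x = - pdv e f x := by
  unfold pdv
  rw [fderiv_fun_neg]; rfl

lemma pdv_mulC {f g : ℝ × ℝ → ℂ} (hf : ContDiff ℝ (⊤ : ℕ∞) f) (hg : ContDiff ℝ (⊤ : ℕ∞) g)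
    (x : ℝ × ℝ) : pdv e (fun y => f y * g y) x = pdv e f x * g x + f x * pdv e g x := by
  unfold pdv
  rw [fderiv_fun_mul (smooth_diff hf x) (smooth_diff hg x)]
  simp; ring

lemma pdv_constmulC (c : ℂ) {f : ℝ × ℝ → ℂ} (hf : ContDiff ℝ (⊤ : ℕ∞) f)
    (x : ℝ × ℝ) : pdv e (fun y => c * f y) x = c * pdv e f x := by
  unfold pdv
  rw [fderiv_const_mul (smooth_diff hf x)]; rfl

lemma pdv_constmulR (c : ℝ) {f : ℝ × ℝ → ℝ} (hf : ContDiff ℝ (⊤ : ℕ∞) f)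
    (x : ℝ × ℝ) : pdv e (fun y => c * f y) x = c * pdv e f x := by
  unfold pdv
  rw [fderiv_const_mul (smooth_diff hf x)]; rfl

lemma pdv_clm {G H : Type*} [NormedAddCommGroup G] [NormedSpace ℝ G]
    [NormedAddCommGroup H] [NormedSpace ℝ H] (L : G →L[ℝ] H) {f : ℝ × ℝ → G}
    (hf : ContDiff ℝ (⊤ : ℕ∞) f) (x : ℝ × ℝ) :
    pdv e (fun y => L (f y)) x = L (pdv e f x) := by
  unfold pdv
  have := (L.hasFDerivAt.comp x (smooth_diff hf x).hasFDerivAt).fderiv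
  have h2 : fderiv ℝ (fun y => L (f y)) x = L.comp (fderiv ℝ f x) := this
  rw [h2]; rfl

lemma pdv_re {f : ℝ × ℝ → ℂ} (hf : ContDiff ℝ (⊤ : ℕ∞) f) (x : ℝ × ℝ) :
    pdv e (fun y => (f y).re) x = (pdv e f x).re := pdv_clm e Complex.reCLM hf x

lemma pdv_im {f : ℝ × ℝ → ℂ} (hf : ContDiff ℝ (⊤ : ℕ∞) f) (x : ℝ × ℝ) :
    pdv e (fun y => (f y).im) x = (pdv e f x).im := pdv_clm e Complex.imCLM hf x

lemma pdv_ofReal {f : ℝ × ℝ → ℝ} (hf : ContDiff ℝ (⊤ : ℕ∞) f) (x : ℝ × ℝ) :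
    pdv e (fun y => (f y : ℂ)) x = ((pdv e f x : ℝ) : ℂ) := pdv_clm e Complex.ofRealCLM hf x

lemma pdv_conj {f : ℝ × ℝ → ℂ} (hf : ContDiff ℝ (⊤ : ℕ∞) f) (x : ℝ × ℝ) :
    pdv e (fun y => (starRingEnd ℂ) (f y)) x = (starRingEnd ℂ) (pdv e f x) :=
  pdv_clm e (Complex.conjCLE : ℂ →L[ℝ] ℂ) hf x

lemma pdv_comm (e' : ℝ × ℝ) {f : ℝ × ℝ → E} (hf : ContDiff ℝ (⊤ : ℕ∞) f) (x : ℝ × ℝ) :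
    pdv e (pdv e' f) x = pdv e' (pdv e f) x := by
  have hs : IsSymmSndFDerivAt ℝ f x :=
    hf.contDiffAt.isSymmSndFDerivAt (by
      rw [minSmoothness_of_isRCLikeNormedField]; exact WithTop.coe_le_coe.2 (le_top : (2 : ℕ∞) ≤ ⊤))
  have hd : DifferentiableAt ℝ (fderiv ℝ f) x :=
    (hf.fderiv_right (m := (⊤ : ℕ∞)) (by simp)).differentiable (by simp) x
  have key : ∀ a b : ℝ × ℝ, pdv a (pdv b f) x = fderiv ℝ (fderiv ℝ f) x a b := by
    intro a b
    unfold pdv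
    rw [fderiv_clm_apply hd (differentiableAt_const b)]
    simp
  rw [key, key]
  exact hs e e'

lemma smooth_re {f : ℝ × ℝ → ℂ} (hf : ContDiff ℝ (⊤ : ℕ∞) f) :
    ContDiff ℝ (⊤ : ℕ∞) (fun y => (f y).re) := Complex.reCLM.contDiff.comp hf
lemma smooth_im {f : ℝ × ℝ → ℂ} (hf : ContDiff ℝ (⊤ : ℕ∞) f) :
    ContDiff ℝ (⊤ : ℕ∞) (fun y => (f y).im) := Complex.imCLM.contDiff.comp hf
lemma smooth_ofReal {f : ℝ × ℝ → ℝ} (hf : ContDiff ℝ (⊤ : ℕ∞) f) :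
    ContDiff ℝ (⊤ : ℕ∞) (fun y => (f y : ℂ)) := Complex.ofRealCLM.contDiff.comp hf
lemma smooth_conj {f : ℝ × ℝ → ℂ} (hf : ContDiff ℝ (⊤ : ℕ∞) f) :
    ContDiff ℝ (⊤ : ℕ∞) (fun y => (starRingEnd ℂ) (f y)) :=
  (Complex.conjCLE : ℂ →L[ℝ] ℂ).contDiff.comp hf

end pdv

lemma second_deriv_test {φ : ℝ → ℝ} {a : ℝ} (hc : ContinuousAt φ a) (h : IsLocalMin φ a) :
    0 ≤ deriv (deriv φ) a := by
  by_contra hneg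
  push Not at hneg
  have hmax := isLocalMax_of_deriv_deriv_neg hneg h.deriv_eq_zero hc
  have he : φ =ᶠ[nhds a] fun _ => φ a := by
    filter_upwards [h, hmax] with y h1 h2
    exact le_antisymm h2 h1
  have h2 := he.deriv.deriv_eq
  simp at h2
  linarith

lemma pd1_line {f : ℝ × ℝ → ℝ} (hf : Differentiable ℝ f) (s t : ℝ) :
    HasDerivAt (fun r => f (r, t)) (pd1 f (s, t)) s := by
  have h1 : HasDerivAt (fun r : ℝ => (r, t)) ((1 : ℝ), (0 : ℝ)) s :=
    (hasDerivAt_id s).prodMk (hasDerivAt_const s t)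
  exact (hf (s, t)).hasFDerivAt.comp_hasDerivAt s h1

lemma pd2_line {f : ℝ × ℝ → ℝ} (hf : Differentiable ℝ f) (s t : ℝ) :
    HasDerivAt (fun r => f (s, r)) (pd2 f (s, t)) t := by
  have h1 : HasDerivAt (fun r : ℝ => (s, r)) ((0 : ℝ), (1 : ℝ)) t :=
    (hasDerivAt_const t s).prodMk (hasDerivAt_id t)
  exact (hf (s, t)).hasFDerivAt.comp_hasDerivAt t h1

lemma localMin_pd1 {f : ℝ × ℝ → ℝ} (hf : ContDiff ℝ (⊤ : ℕ∞) f) {q : ℝ × ℝ}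
    (h : IsLocalMin f q) : 0 ≤ pd1 (pd1 f) q := by
  obtain ⟨a, b⟩ := q
  have hd := smooth_diff hf
  have hd1 : Differentiable ℝ (pd1 f) := smooth_diff (pdv_smooth (1, 0) hf)
  have e1 : deriv (fun r => f (r, b)) = fun r => pd1 f (r, b) := by
    funext r; exact (pd1_line hd r b).deriv
  have hcont : ContinuousAt (fun r : ℝ => (r, b)) a := by fun_prop
  have hm : IsLocalMin (fun r => f (r, b)) a := hcont.eventually h
  have := second_deriv_test (pd1_line hd a b).continuousAt hm
  rw [e1, (pd1_line hd1 a b).deriv] at this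
  exact this

lemma localMin_pd2 {f : ℝ × ℝ → ℝ} (hf : ContDiff ℝ (⊤ : ℕ∞) f) {q : ℝ × ℝ}
    (h : IsLocalMin f q) : 0 ≤ pd2 (pd2 f) q := by
  obtain ⟨a, b⟩ := q
  have hd := smooth_diff hf
  have hd1 : Differentiable ℝ (pd2 f) := smooth_diff (pdv_smooth (0, 1) hf)
  have e1 : deriv (fun r => f (a, r)) = fun r => pd2 f (a, r) := by
    funext r; exact (pd2_line hd a r).deriv
  have hcont : ContinuousAt (fun r : ℝ => (a, r)) b := by fun_prop
  have hm : IsLocalMin (fun r => f (a, r)) b := hcont.eventually h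
  have := second_deriv_test (pd2_line hd a b).continuousAt hm
  rw [e1, (pd2_line hd1 a b).deriv] at this
  exact this

/-- the barrier function -/
def barrier (m α K : ℝ) (p : ℝ × ℝ) (y : ℝ × ℝ) : ℝ :=
  m * (Real.exp (-α * ((y.1 - p.1) ^ 2 + (y.2 - p.2) ^ 2)) - K)

lemma barrier_smooth (m α K : ℝ) (p : ℝ × ℝ) : ContDiff ℝ (⊤ : ℕ∞) (barrier m α K p) := by
  unfold barrier; fun_prop

lemma barrier_lap (m α K : ℝ) (p q : ℝ × ℝ) :
    pd1 (pd1 (barrier m α K p)) q + pd2 (pd2 (barrier m α K p)) q =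
      m * Real.exp (-α * ((q.1 - p.1) ^ 2 + (q.2 - p.2) ^ 2)) *
        (4 * α ^ 2 * ((q.1 - p.1) ^ 2 + (q.2 - p.2) ^ 2) - 4 * α) := by
  have hs := barrier_smooth m α K p
  have hd := smooth_diff hs
  have hd1 : Differentiable ℝ (pd1 (barrier m α K p)) := smooth_diff (pdv_smooth (1, 0) hs)
  have hd2 : Differentiable ℝ (pd2 (barrier m α K p)) := smooth_diff (pdv_smooth (0, 1) hs)
  have base : ∀ (c d s : ℝ), HasDerivAt
      (fun r : ℝ => Real.exp (-α * ((r - c) ^ 2 + d)))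
      (Real.exp (-α * ((s - c) ^ 2 + d)) * (-α * (2 * (s - c)))) s := by
    intro c d s
    have h1 : HasDerivAt (fun r : ℝ => -α * ((r - c) ^ 2 + d)) (-α * (2 * (s - c))) s := by
      have := ((((hasDerivAt_id s).sub_const c).pow 2).add_const d).const_mul (-α)
      refine this.congr_deriv ?_
      simp only [id, Nat.cast_ofNat, mul_one, Nat.add_one_sub_one, pow_one]
    exact h1.exp
  have e1 : ∀ s t, pd1 (barrier m α K p) (s, t) =
      m * (Real.exp (-α * ((s - p.1) ^ 2 + (t - p.2) ^ 2)) * (-α * (2 * (s - p.1)))) := by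
    intro s t
    refine (pd1_line hd s t).unique ?_
    exact ((base p.1 ((t - p.2) ^ 2) s).sub_const K).const_mul m
  have e2 : ∀ s t, pd2 (barrier m α K p) (s, t) =
      m * (Real.exp (-α * ((t - p.2) ^ 2 + (s - p.1) ^ 2)) * (-α * (2 * (t - p.2)))) := by
    intro s t
    refine (pd2_line hd s t).unique ?_
    have := ((base p.2 ((s - p.1) ^ 2) t).sub_const K).const_mul m
    refine this.congr_of_eventuallyEq (Filter.Eventually.of_forall fun r => ?_)
    simp only [barrier]
    rw [add_comm]
  have lin : ∀ c s : ℝ, HasDerivAt (fun r : ℝ => -α * (2 * (r - c))) (-α * (2 * 1)) s := by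
    intro c s
    exact (((hasDerivAt_id s).sub_const c).const_mul 2).const_mul (-α)
  obtain ⟨s, t⟩ := q
  have f1 := (pd1_line hd1 s t).unique ((((base p.1 ((t - p.2) ^ 2) s).mul (lin p.1 s)).const_mul
    m).congr_of_eventuallyEq (Filter.Eventually.of_forall fun r => e1 r t))
  have f2 := (pd2_line hd2 s t).unique ((((base p.2 ((s - p.1) ^ 2) t).mul (lin p.2 t)).const_mul
    m).congr_of_eventuallyEq (Filter.Eventually.of_forall fun r => e2 s r))
  rw [f1, f2, add_comm ((t - p.2) ^ 2)]
  ring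

lemma strong_max {f c : ℝ × ℝ → ℝ} (hf : ContDiff ℝ (⊤ : ℕ∞) f) (hc : Continuous c)
    (h0 : ∀ x, 0 ≤ f x) (hL : ∀ x, pd1 (pd1 f) x + pd2 (pd2 f) x ≤ c x * f x)
    {p : ℝ × ℝ} (hp : 0 < f p) (x : ℝ × ℝ) : 0 < f x := by
  set ρ : ℝ × ℝ → ℝ := fun y => (y.1 - p.1) ^ 2 + (y.2 - p.2) ^ 2 with hρ
  have hρc : Continuous ρ := by fun_prop
  have hρ0 : ∀ y, 0 ≤ ρ y := fun y => by positivity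
  set R := ρ x + 1 with hR
  have hRpos : 0 < R := by have := hρ0 x; linarith
  have near : ∀ s : ℝ, 0 ≤ s → ∀ y, ρ y ≤ s ^ 2 → dist y p ≤ s := by
    intro s hs y hy
    simp only [hρ] at hy
    rw [Prod.dist_eq, Real.dist_eq, Real.dist_eq]
    refine max_le (abs_le_of_sq_le_sq ?_ hs) (abs_le_of_sq_le_sq ?_ hs)
    · nlinarith [sq_nonneg (y.2 - p.2)]
    · nlinarith [sq_nonneg (y.1 - p.1)]
  set S : Set (ℝ × ℝ) := {y | ρ y ≤ R} with hS
  have hScl : IsClosed S := isClosed_le hρc continuous_const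
  have hSc : IsCompact S := by
    refine (isCompact_closedBall p (R + 1)).of_isClosed_subset hScl ?_
    intro y hy
    have hy' : ρ y ≤ R := hy
    exact near (R + 1) (by linarith) y (by nlinarith)
  obtain ⟨C0, hC0⟩ := hSc.bddAbove_image hc.continuousOn
  set C := max C0 0 with hC
  have hCnn : 0 ≤ C := le_max_right _ _
  have hCc : ∀ y ∈ S, c y ≤ C := fun y hy =>
    (hC0 (Set.mem_image_of_mem c hy)).trans (le_max_left _ _)
  set m := f p / 2 with hm
  have hmpos : 0 < m := by positivity
  have hfc : Continuous f := hf.continuous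
  obtain ⟨δ, hδ, hball⟩ := Metric.eventually_nhds_iff.1
    (hfc.continuousAt.eventually (lt_mem_nhds (show m < f p by linarith)))
  set s := (δ / 2) ^ 2 with hs
  have hspos : 0 < s := by positivity
  have hin : ∀ y, ρ y ≤ s → m ≤ f y := by
    intro y hy
    refine (hball ?_).le
    have := near (δ / 2) (by positivity) y hy
    linarith
  set α := 2 / s + C with hα
  have hαs : α * s = 2 + C * s := by rw [hα]; field_simp
  have hαpos : 0 < α := by positivity
  have hαC : C < α := by
    have : 0 < 2 / s := by positivity
    linarith
  set w := barrier m α (Real.exp (-α * R)) p with hw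
  have hws : ContDiff ℝ (⊤ : ℕ∞) w := barrier_smooth _ _ _ _
  have hwv : ∀ y, w y = m * (Real.exp (-α * ρ y) - Real.exp (-α * R)) := fun y => rfl
  have hgs : ContDiff ℝ (⊤ : ℕ∞) (fun y => f y - w y) := hf.sub hws
  have hxS : x ∈ S := by show ρ x ≤ R; linarith
  obtain ⟨q, hqS, hq⟩ := hSc.exists_isMinOn ⟨x, hxS⟩ hgs.continuous.continuousOn
  have hwx : 0 < w x := by
    rw [hwv]
    apply mul_pos hmpos
    rw [sub_pos, Real.exp_lt_exp]
    nlinarith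
  by_cases hgq : 0 ≤ f q - w q
  · have : f q - w q ≤ f x - w x := hq hxS
    linarith
  exfalso
  push Not at hgq
  have hqR : ρ q < R := by
    rcases lt_or_eq_of_le (show ρ q ≤ R from hqS) with h | h
    · exact h
    · exfalso
      have : w q = 0 := by rw [hwv, h]; ring
      have := h0 q
      linarith
  have hqs : s < ρ q := by
    by_contra hcon
    push Not at hcon
    have h1 := hin q hcon
    have h2 : w q ≤ m := by
      rw [hwv]
      have e1 : Real.exp (-α * ρ q) ≤ 1 := by
        rw [Real.exp_le_one_iff]; nlinarith [hρ0 q]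
      have e2 := Real.exp_pos (-α * R)
      nlinarith
    linarith
  have hloc : IsLocalMin (fun y => f y - w y) q :=
    hq.isLocalMin (Filter.mem_of_superset ((isOpen_lt hρc continuous_const).mem_nhds hqR)
      (fun y (hy : ρ y < R) => hy.le))
  have l1 := localMin_pd1 hgs hloc
  have l2 := localMin_pd2 hgs hloc
  have s1 : pd1 (fun y => f y - w y) = fun y => pd1 f y - pd1 w y := by
    funext y; exact pdv_sub _ hf hws y
  have s2 : pd2 (fun y => f y - w y) = fun y => pd2 f y - pd2 w y := by
    funext y; exact pdv_sub _ hf hws y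
  have s3 : pd1 (fun y => pd1 f y - pd1 w y) q = pd1 (pd1 f) q - pd1 (pd1 w) q :=
    pdv_sub _ (pdv_smooth _ hf) (pdv_smooth _ hws) q
  have s4 : pd2 (fun y => pd2 f y - pd2 w y) q = pd2 (pd2 f) q - pd2 (pd2 w) q :=
    pdv_sub _ (pdv_smooth _ hf) (pdv_smooth _ hws) q
  rw [s1, s3] at l1
  rw [s2, s4] at l2
  have l3 : pd1 (pd1 w) q + pd2 (pd2 w) q =
      m * Real.exp (-α * ρ q) * (4 * α ^ 2 * ρ q - 4 * α) := barrier_lap _ _ _ _ _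
  have l4 := hL q
  have l5 : c q * f q ≤ C * f q := mul_le_mul_of_nonneg_right (hCc q hqS) (h0 q)
  have hbig : C < 4 * α ^ 2 * ρ q - 4 * α := by
    have : α * s < α * ρ q := mul_lt_mul_of_pos_left hqs hαpos
    have h0' := mul_nonneg hCnn hspos.le
    have h1 : 1 ≤ α * ρ q - 1 := by linarith
    have h2 : α * 1 ≤ α * (α * ρ q - 1) := mul_le_mul_of_nonneg_left h1 hαpos.le
    have h3 : 4 * α ^ 2 * ρ q - 4 * α = 4 * (α * (α * ρ q - 1)) := by ring
    rw [h3]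
    linarith
  have hE := Real.exp_pos (-α * ρ q)
  have hE2 := Real.exp_pos (-α * R)
  have l6 : C * w q < m * Real.exp (-α * ρ q) * (4 * α ^ 2 * ρ q - 4 * α) := by
    have a1 : C * w q ≤ m * Real.exp (-α * ρ q) * C := by
      have a0 := mul_nonneg hCnn (mul_pos hmpos hE2).le
      have a3 : C * w q = m * Real.exp (-α * ρ q) * C - C * (m * Real.exp (-α * R)) := by
        rw [hwv]; ring
      linarith
    have a2 := mul_lt_mul_of_pos_left hbig (mul_pos hmpos hE)
    linarith
  have l7 : C * (f q - w q) ≤ 0 := mul_nonpos_of_nonneg_of_nonpos hCnn hgq.le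
  have l8 : C * (f q - w q) = C * f q - C * w q := by ring
  linarith

lemma periodic_reduce {E : Type*} {f : ℝ × ℝ → E} (hf : Periodic2 f) (x : ℝ × ℝ) :
    f x = f (Int.fract x.1, Int.fract x.2) := by
  have h1 : ∀ t, Function.Periodic (fun s => f (s, t)) 1 := fun t s => (hf (s, t)).1
  have h2 : ∀ s, Function.Periodic (fun t => f (s, t)) 1 := fun s t => (hf (s, t)).2
  have k1 := (h1 x.2).sub_int_mul_eq (x := x.1) ⌊x.1⌋
  have k2 := (h2 (Int.fract x.1)).sub_int_mul_eq (x := x.2) ⌊x.2⌋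
  simp only [mul_one, Int.self_sub_floor] at k1 k2
  rw [k2, k1]

lemma fract_mem (x : ℝ × ℝ) :
    (Int.fract x.1, Int.fract x.2) ∈ Set.Icc (0:ℝ) 1 ×ˢ Set.Icc (0:ℝ) 1 :=
  ⟨⟨Int.fract_nonneg _, (Int.fract_lt_one _).le⟩, ⟨Int.fract_nonneg _, (Int.fract_lt_one _).le⟩⟩

lemma periodic_min {f : ℝ × ℝ → ℝ} (hf : Periodic2 f) (hc : Continuous f) :
    ∃ q, ∀ x, f q ≤ f x := by
  have hK : IsCompact (Set.Icc (0:ℝ) 1 ×ˢ Set.Icc (0:ℝ) 1) := isCompact_Icc.prod isCompact_Icc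
  obtain ⟨q, -, hq⟩ := hK.exists_isMinOn ⟨_, fract_mem 0⟩ hc.continuousOn
  refine ⟨q, fun x => ?_⟩
  rw [periodic_reduce hf x]
  exact hq (fract_mem x)

lemma integrable_sq {f : ℝ × ℝ → ℝ} (hc : Continuous f) :
    IntegrableOn f (Set.Icc (0:ℝ) 1 ×ˢ Set.Icc (0:ℝ) 1) :=
  hc.continuousOn.integrableOn_compact (isCompact_Icc.prod isCompact_Icc)

lemma integral_div {f g : ℝ × ℝ → ℝ} (hf : ContDiff ℝ (⊤ : ℕ∞) f) (hg : ContDiff ℝ (⊤ : ℕ∞) g)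
    (hfp : Periodic2 f) (hgp : Periodic2 g) :
    ∫ x in Set.Icc (0:ℝ) 1 ×ˢ Set.Icc (0:ℝ) 1, (pd1 f x + pd2 g x) = 0 := by
  have hset : Set.Icc (0:ℝ) 1 ×ˢ Set.Icc (0:ℝ) 1 = Set.Icc ((0:ℝ), (0:ℝ)) (1, 1) :=
    Set.Icc_prod_Icc _ _ _ _
  have hcont : Continuous (fun x => pd1 f x + pd2 g x) :=
    (pdv_smooth (1, 0) hf).continuous.add (pdv_smooth (0, 1) hg).continuous
  have hi := integrable_sq hcont
  rw [hset] at hi ⊢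
  have := integral_divergence_prod_Icc_of_hasFDerivAt_of_le f g (fderiv ℝ f) (fderiv ℝ g)
    ((0:ℝ), (0:ℝ)) (1, 1) (by constructor <;> simp) hf.continuous.continuousOn
    hg.continuous.continuousOn (fun x _ => (smooth_diff hf x).hasFDerivAt)
    (fun x _ => (smooth_diff hg x).hasFDerivAt) hi
  have a1 : ∀ y, f (1, y) = f (0, y) := fun y => by simpa using (hfp (0, y)).1
  have a2 : ∀ y, g (y, 1) = g (y, 0) := fun y => by simpa using (hgp (y, 0)).2
  simp only [a1, a2] at this
  unfold pd1 pd2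
  rw [this]; ring

lemma zero_of_integral {f : ℝ × ℝ → ℝ} (hf : Periodic2 f) (hc : Continuous f)
    (h0 : ∀ x, 0 ≤ f x)
    (hi : ∫ x in Set.Icc (0:ℝ) 1 ×ˢ Set.Icc (0:ℝ) 1, f x ≤ 0) (x : ℝ × ℝ) : f x = 0 := by
  set K := Set.Icc (0:ℝ) 1 ×ˢ Set.Icc (0:ℝ) 1 with hK
  have hz : ∫ x in K, f x = 0 := le_antisymm hi (integral_nonneg h0)
  rw [integral_eq_zero_iff_of_nonneg h0 (integrable_sq hc)] at hz
  have hint : K ⊆ closure (interior K) := by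
    rw [hK, interior_prod_eq, interior_Icc, closure_prod_eq, closure_Ioo (by norm_num)]
  have := Measure.eqOn_of_ae_eq hz hc.continuousOn continuousOn_const hint
  rw [periodic_reduce hf x]
  exact this (fract_mem x)

lemma D1_smooth {A : ℝ × ℝ → ℝ} {u : ℝ × ℝ → ℂ} (hA : ContDiff ℝ (⊤ : ℕ∞) A)
    (hu : ContDiff ℝ (⊤ : ℕ∞) u) : ContDiff ℝ (⊤ : ℕ∞) (D1 A u) :=
  (pdv_smooth (1, 0) hu).sub ((contDiff_const.mul (smooth_ofReal hA)).mul hu)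

lemma D2_smooth {A : ℝ × ℝ → ℝ} {u : ℝ × ℝ → ℂ} (hA : ContDiff ℝ (⊤ : ℕ∞) A)
    (hu : ContDiff ℝ (⊤ : ℕ∞) u) : ContDiff ℝ (⊤ : ℕ∞) (D2 A u) :=
  (pdv_smooth (0, 1) hu).sub ((contDiff_const.mul (smooth_ofReal hA)).mul hu)

lemma curv_smooth {A1 A2 : ℝ × ℝ → ℝ} (hA1 : ContDiff ℝ (⊤ : ℕ∞) A1)
    (hA2 : ContDiff ℝ (⊤ : ℕ∞) A2) : ContDiff ℝ (⊤ : ℕ∞) (curv A1 A2) :=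
  (pdv_smooth (1, 0) hA2).sub (pdv_smooth (0, 1) hA1)

lemma hfun_smooth (ε : ℝ) {u : ℝ × ℝ → ℂ} (hu : ContDiff ℝ (⊤ : ℕ∞) u) :
    ContDiff ℝ (⊤ : ℕ∞) (hfun ε u) :=
  (contDiff_const.sub (hu.norm_sq ℝ)).div_const _

lemma sigP_smooth {A1 A2 : ℝ × ℝ → ℝ} {u : ℝ × ℝ → ℂ} (hA1 : ContDiff ℝ (⊤ : ℕ∞) A1)
    (hA2 : ContDiff ℝ (⊤ : ℕ∞) A2)
    (hu : ContDiff ℝ (⊤ : ℕ∞) u) : ContDiff ℝ (⊤ : ℕ∞) (sigP u A1 A2) :=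
  (D1_smooth hA1 hu).add (contDiff_const.mul (D2_smooth hA2 hu))

lemma sigM_smooth {A1 A2 : ℝ × ℝ → ℝ} {u : ℝ × ℝ → ℂ} (hA1 : ContDiff ℝ (⊤ : ℕ∞) A1)
    (hA2 : ContDiff ℝ (⊤ : ℕ∞) A2)
    (hu : ContDiff ℝ (⊤ : ℕ∞) u) : ContDiff ℝ (⊤ : ℕ∞) (sigM u A1 A2) :=
  (D1_smooth hA1 hu).sub (contDiff_const.mul (D2_smooth hA2 hu))

lemma D1_periodic {A : ℝ × ℝ → ℝ} {u : ℝ × ℝ → ℂ} (hA : Periodic2 A)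
    (hu : Periodic2 u) : Periodic2 (D1 A u) := by
  intro x
  have h := pdv_periodic (1, 0) hu x
  simp only [D1, pd1_eq, h, hA x, hu x, and_self]

lemma D2_periodic {A : ℝ × ℝ → ℝ} {u : ℝ × ℝ → ℂ} (hA : Periodic2 A)
    (hu : Periodic2 u) : Periodic2 (D2 A u) := by
  intro x
  have h := pdv_periodic (0, 1) hu x
  simp only [D2, pd2_eq, h, hA x, hu x, and_self]

lemma curv_periodic {A1 A2 : ℝ × ℝ → ℝ} (hA1 : Periodic2 A1) (hA2 : Periodic2 A2) :
    Periodic2 (curv A1 A2) := by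
  intro x
  have h := pdv_periodic (0, 1) hA1 x
  have h' := pdv_periodic (1, 0) hA2 x
  simp only [curv, pd1_eq, pd2_eq, h, h', and_self]

lemma hfun_periodic (ε : ℝ) {u : ℝ × ℝ → ℂ} (hu : Periodic2 u) : Periodic2 (hfun ε u) := by
  intro x
  simp only [hfun, hu x, and_self]

lemma sigP_periodic {A1 A2 : ℝ × ℝ → ℝ} {u : ℝ × ℝ → ℂ} (hA1 : Periodic2 A1)
    (hA2 : Periodic2 A2) (hu : Periodic2 u) : Periodic2 (sigP u A1 A2) := by
  intro x
  simp only [sigP, D1_periodic hA1 hu x, D2_periodic hA2 hu x, and_self]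

lemma sigM_periodic {A1 A2 : ℝ × ℝ → ℝ} {u : ℝ × ℝ → ℂ} (hA1 : Periodic2 A1)
    (hA2 : Periodic2 A2) (hu : Periodic2 u) : Periodic2 (sigM u A1 A2) := by
  intro x
  simp only [sigM, D1_periodic hA1 hu x, D2_periodic hA2 hu x, and_self]

lemma pdv_D1 (e : ℝ × ℝ) {A : ℝ × ℝ → ℝ} {u : ℝ × ℝ → ℂ} (hA : ContDiff ℝ (⊤ : ℕ∞) A)
    (hu : ContDiff ℝ (⊤ : ℕ∞) u) (x : ℝ × ℝ) :
    pdv e (D1 A u) x = pdv e (pd1 u) x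
      - Complex.I * ((pdv e A x : ℝ) * u x + A x * pdv e u x) := by
  have h1 : ContDiff ℝ (⊤ : ℕ∞) (fun y => Complex.I * (A y : ℂ)) :=
    contDiff_const.mul (smooth_ofReal hA)
  have := pdv_sub e (pdv_smooth (1, 0) hu) (h1.mul hu) x
  rw [pdv_mulC e h1 hu, pdv_constmulC e _ (smooth_ofReal hA), pdv_ofReal e hA] at this
  refine this.trans ?_
  rw [pd1_eq]; ring

lemma pdv_D2 (e : ℝ × ℝ) {A : ℝ × ℝ → ℝ} {u : ℝ × ℝ → ℂ} (hA : ContDiff ℝ (⊤ : ℕ∞) A)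
    (hu : ContDiff ℝ (⊤ : ℕ∞) u) (x : ℝ × ℝ) :
    pdv e (D2 A u) x = pdv e (pd2 u) x
      - Complex.I * ((pdv e A x : ℝ) * u x + A x * pdv e u x) := by
  have h1 : ContDiff ℝ (⊤ : ℕ∞) (fun y => Complex.I * (A y : ℂ)) :=
    contDiff_const.mul (smooth_ofReal hA)
  have := pdv_sub e (pdv_smooth (0, 1) hu) (h1.mul hu) x
  rw [pdv_mulC e h1 hu, pdv_constmulC e _ (smooth_ofReal hA), pdv_ofReal e hA] at this
  refine this.trans ?_
  rw [pd2_eq]; ring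

/-- `[D₁, D₂] u = - i F u`. -/
lemma comm_D {A1 A2 : ℝ × ℝ → ℝ} {u : ℝ × ℝ → ℂ} (hA1 : ContDiff ℝ (⊤ : ℕ∞) A1)
    (hA2 : ContDiff ℝ (⊤ : ℕ∞) A2) (hu : ContDiff ℝ (⊤ : ℕ∞) u) (x : ℝ × ℝ) :
    D1 A1 (D2 A2 u) x - D2 A2 (D1 A1 u) x = - Complex.I * (curv A1 A2 x : ℝ) * u x := by
  have h1 := pdv_D2 (1, 0) hA2 hu x
  have h2 := pdv_D1 (0, 1) hA1 hu x
  have h3 := pdv_comm (1, 0) (0, 1) hu x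
  have e1 : D1 A1 (D2 A2 u) x = pdv (1, 0) (D2 A2 u) x - I * (A1 x) * D2 A2 u x := rfl
  have e2 : D2 A2 (D1 A1 u) x = pdv (0, 1) (D1 A1 u) x - I * (A2 x) * D1 A1 u x := rfl
  rw [e1, e2, h1, h2, pd1_eq, pd2_eq, h3]
  simp only [D1, D2, curv, pd1_eq, pd2_eq]
  push_cast
  ring

lemma pdv_hfun (e : ℝ × ℝ) (ε : ℝ) {u : ℝ × ℝ → ℂ} (hu : ContDiff ℝ (⊤ : ℕ∞) u) (x : ℝ × ℝ) :
    pdv e (hfun ε u) x = -((starRingEnd ℂ) (u x) * pdv e u x).re / ε ^ 2 := by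
  have hcs := (smooth_conj hu).mul hu
  have e1 : hfun ε u = fun y => (1 / (2 * ε ^ 2)) * (1 - ((starRingEnd ℂ) (u y) * u y).re) := by
    funext y
    simp only [hfun, Complex.sq_norm, Complex.normSq_apply]
    simp
    ring
  rw [e1, pdv_constmulR e _ (contDiff_const.sub (smooth_re hcs)),
    pdv_sub e contDiff_const (smooth_re hcs), pdv_re e hcs, pdv_mulC e (smooth_conj hu) hu,
    pdv_conj e hu]
  have : pdv e (fun _ : ℝ × ℝ => (1:ℝ)) x = 0 := by simp [pdv]
  rw [this]
  simp
  by_cases hε : ε = 0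
  · simp [hε]
  field_simp
  ring

/-- pairing rule -/
lemma pdv_pair (e : ℝ × ℝ) {u w : ℝ × ℝ → ℂ} (hu : ContDiff ℝ (⊤ : ℕ∞) u)
    (hw : ContDiff ℝ (⊤ : ℕ∞) w) (x : ℝ × ℝ) :
    pdv e (fun y => (starRingEnd ℂ) (u y) * w y) x =
      (starRingEnd ℂ) (pdv e u x) * w x + (starRingEnd ℂ) (u x) * pdv e w x := by
  rw [pdv_mulC e (smooth_conj hu) hw, pdv_conj e hu]

lemma cov1_pair {A : ℝ × ℝ → ℝ} {u w : ℝ × ℝ → ℂ} (hu : ContDiff ℝ (⊤ : ℕ∞) u)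
    (hw : ContDiff ℝ (⊤ : ℕ∞) w) (x : ℝ × ℝ) :
    pd1 (fun y => (starRingEnd ℂ) (u y) * w y) x =
      (starRingEnd ℂ) (D1 A u x) * w x + (starRingEnd ℂ) (u x) * D1 A w x := by
  rw [pd1_eq, pdv_pair _ hu hw]
  simp only [D1, pd1_eq, map_sub, map_mul, Complex.conj_I, Complex.conj_ofReal]
  ring

lemma cov2_pair {A : ℝ × ℝ → ℝ} {u w : ℝ × ℝ → ℂ} (hu : ContDiff ℝ (⊤ : ℕ∞) u)
    (hw : ContDiff ℝ (⊤ : ℕ∞) w) (x : ℝ × ℝ) :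
    pd2 (fun y => (starRingEnd ℂ) (u y) * w y) x =
      (starRingEnd ℂ) (D2 A u x) * w x + (starRingEnd ℂ) (u x) * D2 A w x := by
  rw [pd2_eq, pdv_pair _ hu hw]
  simp only [D2, pd2_eq, map_sub, map_mul, Complex.conj_I, Complex.conj_ofReal]
  ring

lemma pd1_hfun (ε : ℝ) (A : ℝ × ℝ → ℝ) {u : ℝ × ℝ → ℂ} (hu : ContDiff ℝ (⊤ : ℕ∞) u)
    (x : ℝ × ℝ) :
    pd1 (hfun ε u) x = -((starRingEnd ℂ) (u x) * D1 A u x).re / ε ^ 2 := by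
  rw [pd1_eq, pdv_hfun _ _ hu]
  simp [D1, pd1_eq]
  ring

lemma pd2_hfun (ε : ℝ) (A : ℝ × ℝ → ℝ) {u : ℝ × ℝ → ℂ} (hu : ContDiff ℝ (⊤ : ℕ∞) u)
    (x : ℝ × ℝ) :
    pd2 (hfun ε u) x = -((starRingEnd ℂ) (u x) * D2 A u x).re / ε ^ 2 := by
  rw [pd2_eq, pdv_hfun _ _ hu]
  simp [D2, pd2_eq]
  ring

lemma D1_add_I (A : ℝ × ℝ → ℝ) (c : ℂ) {f g : ℝ × ℝ → ℂ} (hf : ContDiff ℝ (⊤ : ℕ∞) f)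
    (hg : ContDiff ℝ (⊤ : ℕ∞) g) (x : ℝ × ℝ) :
    D1 A (fun y => f y + c * g y) x = D1 A f x + c * D1 A g x := by
  simp only [D1, pd1_eq]
  rw [pdv_add _ hf (contDiff_const.mul hg), pdv_constmulC _ _ hg]
  ring

lemma D2_add_I (A : ℝ × ℝ → ℝ) (c : ℂ) {f g : ℝ × ℝ → ℂ} (hf : ContDiff ℝ (⊤ : ℕ∞) f)
    (hg : ContDiff ℝ (⊤ : ℕ∞) g) (x : ℝ × ℝ) :
    D2 A (fun y => f y + c * g y) x = D2 A f x + c * D2 A g x := by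
  simp only [D2, pd2_eq]
  rw [pdv_add _ hf (contDiff_const.mul hg), pdv_constmulC _ _ hg]
  ring

lemma energy_bog {ε : ℝ} (hε : ε ≠ 0) {A1 A2 : ℝ × ℝ → ℝ} {u : ℝ × ℝ → ℂ}
    (hA1 : ContDiff ℝ (⊤ : ℕ∞) A1) (hA2 : ContDiff ℝ (⊤ : ℕ∞) A2) (hu : ContDiff ℝ (⊤ : ℕ∞) u)
    (pA1 : Periodic2 A1) (pA2 : Periodic2 A2) (pu : Periodic2 u) :
    energy ε u A1 A2 = ∫ x in Set.Icc (0:ℝ) 1 ×ˢ Set.Icc (0:ℝ) 1,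
      (‖sigM u A1 A2 x‖ ^ 2 + ε ^ 2 * (curv A1 A2 x + hfun ε u x) ^ 2) := by
  have sj1 := (smooth_conj hu).mul (D1_smooth hA1 hu)
  have sj2 := (smooth_conj hu).mul (D2_smooth hA2 hu)
  set f : ℝ × ℝ → ℝ := fun y => ((starRingEnd ℂ) (u y) * D2 A2 u y).im + A2 y with hf
  set g : ℝ × ℝ → ℝ := fun y => -(((starRingEnd ℂ) (u y) * D1 A1 u y).im + A1 y) with hg
  have sf : ContDiff ℝ (⊤ : ℕ∞) f := (smooth_im sj2).add hA2
  have sg : ContDiff ℝ (⊤ : ℕ∞) g := ((smooth_im sj1).add hA1).neg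
  have pf : Periodic2 f := by
    intro x
    simp only [hf, D2_periodic pA2 pu x, pu x, pA2 x, and_self]
  have pg : Periodic2 g := by
    intro x
    simp only [hg, D1_periodic pA1 pu x, pu x, pA1 x, and_self]
  have hdiv := integral_div sf sg pf pg
  have hpt : ∀ x, ε ^ 2 * curv A1 A2 x ^ 2 + ‖D1 A1 u x‖ ^ 2 + ‖D2 A2 u x‖ ^ 2
      + (1 - ‖u x‖ ^ 2) ^ 2 / (4 * ε ^ 2) =
      (‖sigM u A1 A2 x‖ ^ 2 + ε ^ 2 * (curv A1 A2 x + hfun ε u x) ^ 2)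
        - (pd1 f x + pd2 g x) := by
    intro x
    have h1 : pd1 f x = ((starRingEnd ℂ) (D1 A1 u x) * D2 A2 u x
        + (starRingEnd ℂ) (u x) * D1 A1 (D2 A2 u) x).im + pd1 A2 x := by
      rw [← cov1_pair hu (D2_smooth hA2 hu), pd1_eq, pd1_eq, pd1_eq,
        pdv_add _ (smooth_im sj2) hA2, pdv_im _ sj2]
    have h2 : pd2 g x = -(((starRingEnd ℂ) (D2 A2 u x) * D1 A1 u x
        + (starRingEnd ℂ) (u x) * D2 A2 (D1 A1 u) x).im + pd2 A1 x) := by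
      rw [← cov2_pair hu (D1_smooth hA1 hu), pd2_eq, pd2_eq, pd2_eq,
        pdv_neg, pdv_add _ (smooth_im sj1) hA1, pdv_im _ sj1]
    have h3 := comm_D hA1 hA2 hu x
    have h4 : D1 A1 (D2 A2 u) x = D2 A2 (D1 A1 u) x - Complex.I * (curv A1 A2 x : ℝ) * u x := by
      linear_combination h3
    have h5 : pd1 A2 x = curv A1 A2 x + pd2 A1 x := by simp [curv]
    rw [h1, h2, h4, h5]
    simp only [sigM, hfun]
    generalize D1 A1 u x = a
    generalize D2 A2 u x = b
    generalize D2 A2 (D1 A1 u) x = c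
    generalize curv A1 A2 x = F
    generalize u x = z
    simp only [Complex.sq_norm, Complex.normSq_apply]
    simp
    field_simp
    ring
  have i1 : IntegrableOn (fun x => ‖sigM u A1 A2 x‖ ^ 2
      + ε ^ 2 * (curv A1 A2 x + hfun ε u x) ^ 2) (Set.Icc (0:ℝ) 1 ×ˢ Set.Icc (0:ℝ) 1) := by
    apply integrable_sq
    have c1 := (sigM_smooth hA1 hA2 hu).continuous
    have c2 := (curv_smooth hA1 hA2).continuous
    have c3 := (hfun_smooth ε hu).continuous
    fun_prop
  have i2 : IntegrableOn (fun x => pd1 f x + pd2 g x) (Set.Icc (0:ℝ) 1 ×ˢ Set.Icc (0:ℝ) 1) :=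
    integrable_sq ((pdv_smooth (1, 0) sf).continuous.add (pdv_smooth (0, 1) sg).continuous)
  unfold energy
  simp_rw [hpt]
  rw [integral_sub i1 i2, hdiv, sub_zero]

lemma iter_deriv_quartic (a b c : ℝ) :
    iteratedDeriv 2 (fun t : ℝ => a + t ^ 2 * b + t ^ 4 * c) 0 = 2 * b := by
  have h1 : deriv (fun t : ℝ => a + t ^ 2 * b + t ^ 4 * c) =
      fun t => 2 * t * b + 4 * t ^ 3 * c := by
    funext t
    have := (((hasDerivAt_pow 2 t).mul_const b).const_add a).add
      ((hasDerivAt_pow 4 t).mul_const c)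
    refine HasDerivAt.deriv (this.congr_deriv ?_)
    norm_num
  rw [iteratedDeriv_succ, iteratedDeriv_one, h1]
  have := (((hasDerivAt_id (0:ℝ)).const_mul 2).mul_const b).add
    (((hasDerivAt_pow 3 (0:ℝ)).const_mul 4).mul_const c)
  refine HasDerivAt.deriv (this.congr_deriv ?_)
  norm_num

lemma second_var {ε : ℝ} (hε : ε ≠ 0) {A1 A2 : ℝ × ℝ → ℝ} {u : ℝ × ℝ → ℂ}
    (hA1 : ContDiff ℝ (⊤ : ℕ∞) A1) (hA2 : ContDiff ℝ (⊤ : ℕ∞) A2) (hu : ContDiff ℝ (⊤ : ℕ∞) u)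
    (pA1 : Periodic2 A1) (pA2 : Periodic2 A2) (pu : Periodic2 u)
    (hst : Stable ε u A1 A2)
    {a1 a2 : ℝ × ℝ → ℝ} {v : ℝ × ℝ → ℂ}
    (ha1 : ContDiff ℝ (⊤ : ℕ∞) a1) (ha2 : ContDiff ℝ (⊤ : ℕ∞) a2) (hv : ContDiff ℝ (⊤ : ℕ∞) v)
    (pa1 : Periodic2 a1) (pa2 : Periodic2 a2) (pv : Periodic2 v)
    (hL1 : ∀ x, D1 A1 v x - I * D2 A2 v x - I * (a1 x - I * a2 x) * u x = 0)
    (hL2 : ∀ x, ε ^ 2 * curv a1 a2 x = ((starRingEnd ℂ) (u x) * v x).re) :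
    0 ≤ ∫ x in Set.Icc (0:ℝ) 1 ×ˢ Set.Icc (0:ℝ) 1,
      (2 * ((starRingEnd ℂ) (sigM u A1 A2 x) * (-I * (a1 x - I * a2 x) * v x)).re
        - (curv A1 A2 x + hfun ε u x) * ‖v x‖ ^ 2) := by
  set K := Set.Icc (0:ℝ) 1 ×ˢ Set.Icc (0:ℝ) 1
  have c1 := (sigM_smooth hA1 hA2 hu).continuous
  have c2 := (curv_smooth hA1 hA2).continuous
  have c3 := (hfun_smooth ε hu).continuous
  have d1 := ha1.continuous
  have d2 := ha2.continuous
  have d3 := hv.continuous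
  have h := hst v a1 a2 hv pv ha1 pa1 ha2 pa2
  set P : ℝ × ℝ → ℝ := fun x =>
    ‖sigM u A1 A2 x‖ ^ 2 + ε ^ 2 * (curv A1 A2 x + hfun ε u x) ^ 2 with hP
  set Q : ℝ × ℝ → ℝ := fun x =>
    2 * ((starRingEnd ℂ) (sigM u A1 A2 x) * (-I * (a1 x - I * a2 x) * v x)).re
        - (curv A1 A2 x + hfun ε u x) * ‖v x‖ ^ 2 with hQ
  set R : ℝ × ℝ → ℝ := fun x =>
    ‖-I * (a1 x - I * a2 x) * v x‖ ^ 2 + (‖v x‖ ^ 2) ^ 2 / (4 * ε ^ 2) with hR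
  have iP : IntegrableOn P K := integrable_sq (by fun_prop)
  have iQ : IntegrableOn Q K := by
    apply integrable_sq
    have : Continuous (fun x => (starRingEnd ℂ) (sigM u A1 A2 x)) :=
      (smooth_conj (sigM_smooth hA1 hA2 hu)).continuous
    have : Continuous (fun x =>
        ((starRingEnd ℂ) (sigM u A1 A2 x) * (-I * (a1 x - I * a2 x) * v x)).re) :=
      Complex.continuous_re.comp (by fun_prop)
    fun_prop
  have iR : IntegrableOn R K := integrable_sq (by fun_prop)
  have hE : (fun t : ℝ => energy ε (fun x => u x + t • v x)
        (fun x => A1 x + t * a1 x) (fun x => A2 x + t * a2 x)) =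
      fun t => (∫ x in K, P x) + t ^ 2 * (∫ x in K, Q x) + t ^ 4 * (∫ x in K, R x) := by
    funext t
    have hv' : ContDiff ℝ (⊤ : ℕ∞) (fun x => (t : ℂ) * v x) := contDiff_const.mul hv
    have ha1' : ContDiff ℝ (⊤ : ℕ∞) (fun x => t * a1 x) := contDiff_const.mul ha1
    have ha2' : ContDiff ℝ (⊤ : ℕ∞) (fun x => t * a2 x) := contDiff_const.mul ha2
    have eu : (fun x => u x + t • v x) = fun x => u x + (t : ℂ) * v x := by
      funext x; simp
    rw [eu, energy_bog hε (hA1.add ha1') (hA2.add ha2') (hu.add hv')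
      (fun x => by simp only [pA1 x, pa1 x, and_self])
      (fun x => by simp only [pA2 x, pa2 x, and_self])
      (fun x => by simp only [pu x, pv x, and_self])]
    have iPQ : IntegrableOn (fun x => P x + t ^ 2 * Q x) K := iP.add (iQ.const_mul _)
    rw [← integral_const_mul, ← integral_const_mul, ← integral_add iP (iQ.const_mul _),
      ← integral_add iPQ (iR.const_mul _)]
    congr 1
    funext x
    have t1 : sigM (fun x => u x + (t : ℂ) * v x) (fun x => A1 x + t * a1 x)
        (fun x => A2 x + t * a2 x) x = sigM u A1 A2 x
          + (t : ℂ) ^ 2 * (-I * (a1 x - I * a2 x) * v x) := by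
      have e1 := D1_add_I (fun x => A1 x + t * a1 x) t hu hv x
      have e2 := D2_add_I (fun x => A2 x + t * a2 x) t hu hv x
      simp only [sigM]
      rw [e1, e2]
      have := hL1 x
      simp only [D1, D2] at this ⊢
      push_cast
      linear_combination (t : ℂ) * this
    have t2 : curv (fun x => A1 x + t * a1 x) (fun x => A2 x + t * a2 x) x =
        curv A1 A2 x + t * (((starRingEnd ℂ) (u x) * v x).re / ε ^ 2) := by
      rw [← hL2 x]
      simp only [curv, pd1_eq, pd2_eq]
      rw [pdv_add _ hA1 ha1', pdv_add _ hA2 ha2', pdv_constmulR _ _ ha1, pdv_constmulR _ _ ha2]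
      field_simp
      ring
    rw [t1, t2]
    simp only [hP, hQ, hR, hfun, Pi.add_apply]
    generalize -I * (a1 x - I * a2 x) * v x = N
    generalize sigM u A1 A2 x = s
    generalize curv A1 A2 x = F
    generalize u x = z
    generalize v x = w
    have q1 : ((t : ℂ) ^ 2).re = t ^ 2 := by rw [← Complex.ofReal_pow, Complex.ofReal_re]
    have q2 : ((t : ℂ) ^ 2).im = 0 := by rw [← Complex.ofReal_pow, Complex.ofReal_im]
    simp only [Complex.sq_norm, Complex.normSq_apply, Complex.add_re, Complex.add_im,
      Complex.mul_re, Complex.mul_im, Complex.conj_re, Complex.conj_im, Complex.ofReal_re,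
      Complex.ofReal_im, q1, q2]
    field_simp
    ring
  rw [hE, iter_deriv_quartic] at h
  linarith

lemma lap_const (m : ℝ) (x : ℝ × ℝ) :
    pd1 (pd1 (fun _ : ℝ × ℝ => m)) x + pd2 (pd2 (fun _ : ℝ × ℝ => m)) x = 0 := by
  have h1 : pd1 (fun _ : ℝ × ℝ => m) = fun _ => 0 := by funext y; simp [pd1]
  have h2 : pd2 (fun _ : ℝ × ℝ => m) = fun _ => 0 := by funext y; simp [pd2]
  rw [h1, h2]
  simp [pd1, pd2]

section main
variable {ε : ℝ} {A1 A2 : ℝ × ℝ → ℝ} {u : ℝ × ℝ → ℂ}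

lemma DM_sigP (hA1 : ContDiff ℝ (⊤ : ℕ∞) A1) (hA2 : ContDiff ℝ (⊤ : ℕ∞) A2)
    (hu : ContDiff ℝ (⊤ : ℕ∞) u) (hY : IsYMH ε u A1 A2) (x : ℝ × ℝ) :
    D1 A1 (sigP u A1 A2) x - I * D2 A2 (sigP u A1 A2) x =
      ((curv A1 A2 x - hfun ε u x : ℝ) : ℂ) * u x := by
  have e1 : D1 A1 (sigP u A1 A2) x = _ := D1_add_I A1 I (D1_smooth hA1 hu) (D2_smooth hA2 hu) x
  have e2 : D2 A2 (sigP u A1 A2) x = _ := D2_add_I A2 I (D1_smooth hA1 hu) (D2_smooth hA2 hu) x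
  have h1 := hY.1 x
  have h2 := comm_D hA1 hA2 hu x
  rw [e1, e2]
  push_cast
  linear_combination -h1 + I * h2 - (curv A1 A2 x * u x + D2 A2 (D2 A2 u) x) * Complex.I_sq

lemma DP_sigM (hA1 : ContDiff ℝ (⊤ : ℕ∞) A1) (hA2 : ContDiff ℝ (⊤ : ℕ∞) A2)
    (hu : ContDiff ℝ (⊤ : ℕ∞) u) (hY : IsYMH ε u A1 A2) (x : ℝ × ℝ) :
    D1 A1 (sigM u A1 A2) x + I * D2 A2 (sigM u A1 A2) x =
      -((curv A1 A2 x + hfun ε u x : ℝ) : ℂ) * u x := by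
  have e0 : sigM u A1 A2 = fun y => D1 A1 u y + (-I) * D2 A2 u y := by
    funext y; simp only [sigM]; ring
  have e1 := D1_add_I A1 (-I) (D1_smooth hA1 hu) (D2_smooth hA2 hu) x
  have e2 := D2_add_I A2 (-I) (D1_smooth hA1 hu) (D2_smooth hA2 hu) x
  have h1 := hY.1 x
  have h2 := comm_D hA1 hA2 hu x
  rw [e0, e1, e2]
  push_cast
  linear_combination -h1 - I * h2 + (curv A1 A2 x * u x - D2 A2 (D2 A2 u) x) * Complex.I_sq

lemma pd_xi (hε : ε ≠ 0) (hA1 : ContDiff ℝ (⊤ : ℕ∞) A1) (hA2 : ContDiff ℝ (⊤ : ℕ∞) A2)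
    (hu : ContDiff ℝ (⊤ : ℕ∞) u) (hY : IsYMH ε u A1 A2) (x : ℝ × ℝ) :
    ε ^ 2 * pd1 (fun y => curv A1 A2 y - hfun ε u y) x
        = ((starRingEnd ℂ) (u x) * sigP u A1 A2 x).re ∧
    ε ^ 2 * pd2 (fun y => curv A1 A2 y - hfun ε u y) x
        = ((starRingEnd ℂ) (u x) * sigP u A1 A2 x).im := by
  have hc := curv_smooth hA1 hA2
  have hh := hfun_smooth ε hu
  have e1 : pd1 (fun y => curv A1 A2 y - hfun ε u y) x = _ := pdv_sub _ hc hh x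
  have e2 : pd2 (fun y => curv A1 A2 y - hfun ε u y) x = _ := pdv_sub _ hc hh x
  have h1 := pd1_hfun ε A1 hu x
  have h2 := pd2_hfun ε A2 hu x
  have y1 := hY.2.1 x
  have y2 := hY.2.2 x
  rw [← pd1_eq, ← pd1_eq] at e1
  rw [← pd2_eq, ← pd2_eq] at e2
  rw [e1, e2, mul_sub, mul_sub, y1, y2, h1, h2]
  simp only [sigP]
  constructor
  · field_simp
    simp
    ring
  · field_simp
    simp
    ring

lemma pd_eta (hε : ε ≠ 0) (hA1 : ContDiff ℝ (⊤ : ℕ∞) A1) (hA2 : ContDiff ℝ (⊤ : ℕ∞) A2)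
    (hu : ContDiff ℝ (⊤ : ℕ∞) u) (hY : IsYMH ε u A1 A2) (x : ℝ × ℝ) :
    pd1 (fun y => curv A1 A2 y + hfun ε u y) x
        = -(1 / ε ^ 2) * ((starRingEnd ℂ) (u x) * sigM u A1 A2 x).re ∧
    pd2 (fun y => curv A1 A2 y + hfun ε u y) x
        = (1 / ε ^ 2) * ((starRingEnd ℂ) (u x) * sigM u A1 A2 x).im := by
  have hc := curv_smooth hA1 hA2
  have hh := hfun_smooth ε hu
  have e1 : pd1 (fun y => curv A1 A2 y + hfun ε u y) x = _ := pdv_add _ hc hh x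
  have e2 : pd2 (fun y => curv A1 A2 y + hfun ε u y) x = _ := pdv_add _ hc hh x
  have h1 := pd1_hfun ε A1 hu x
  have h2 := pd2_hfun ε A2 hu x
  have y1 := hY.2.1 x
  have y2 := hY.2.2 x
  rw [← pd1_eq, ← pd1_eq] at e1
  rw [← pd2_eq, ← pd2_eq] at e2
  have y1' : pd2 (curv A1 A2) x = ((starRingEnd ℂ) (u x) * D1 A1 u x).im / ε ^ 2 := by
    rw [← y1]; field_simp
  have y2' : pd1 (curv A1 A2) x = -((starRingEnd ℂ) (u x) * D2 A2 u x).im / ε ^ 2 := by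
    rw [← y2]; field_simp
  rw [e1, e2, y1', y2', h1, h2]
  simp only [sigM]
  constructor
  · field_simp
    simp
    ring
  · field_simp
    simp
    ring

lemma lap_eta (hε : ε ≠ 0) (hA1 : ContDiff ℝ (⊤ : ℕ∞) A1) (hA2 : ContDiff ℝ (⊤ : ℕ∞) A2)
    (hu : ContDiff ℝ (⊤ : ℕ∞) u) (hY : IsYMH ε u A1 A2) (x : ℝ × ℝ) :
    pd1 (pd1 (fun y => curv A1 A2 y + hfun ε u y)) x
      + pd2 (pd2 (fun y => curv A1 A2 y + hfun ε u y)) x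
      = (1 / ε ^ 2) * (‖u x‖ ^ 2 * (curv A1 A2 x + hfun ε u x) - ‖sigM u A1 A2 x‖ ^ 2) := by
  have sM := sigM_smooth hA1 hA2 hu
  have sj := (smooth_conj hu).mul sM
  have e1 : pd1 (fun y => curv A1 A2 y + hfun ε u y) = fun y =>
      -(1 / ε ^ 2) * ((starRingEnd ℂ) (u y) * sigM u A1 A2 y).re :=
    funext fun y => (pd_eta hε hA1 hA2 hu hY y).1
  have e2 : pd2 (fun y => curv A1 A2 y + hfun ε u y) = fun y =>
      (1 / ε ^ 2) * ((starRingEnd ℂ) (u y) * sigM u A1 A2 y).im :=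
    funext fun y => (pd_eta hε hA1 hA2 hu hY y).2
  have k1 := cov1_pair (A := A1) hu sM x
  have k2 := cov2_pair (A := A2) hu sM x
  rw [pd1_eq] at k1
  rw [pd2_eq] at k2
  have h := DP_sigM hA1 hA2 hu hY x
  have h' : D1 A1 (sigM u A1 A2) x = -((curv A1 A2 x + hfun ε u x : ℝ) : ℂ) * u x
      - I * D2 A2 (sigM u A1 A2) x := by linear_combination h
  rw [e1, e2, pd1_eq, pd2_eq, pdv_constmulR _ _ (smooth_re sj), pdv_constmulR _ _ (smooth_im sj),
    pdv_re _ sj, pdv_im _ sj, k1, k2, h']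
  generalize curv A1 A2 x + hfun ε u x = η
  generalize D2 A2 (sigM u A1 A2) x = c
  simp only [sigM]
  generalize D1 A1 u x = a
  generalize D2 A2 u x = b
  generalize u x = z
  simp only [Complex.sq_norm, Complex.normSq_apply]
  simp
  field_simp
  ring

end main

/-- Main Theorem (flat torus, trivial bundle): a stable solution of the Yang--Mills--Higgs
equations with `u` not identically zero satisfies the vortex or anti-vortex equations. -/
theorem stable_YMH_solutions_are_vortices
    (ε : ℝ) (hε : 0 < ε) (u : ℝ × ℝ → ℂ) (A1 A2 : ℝ × ℝ → ℝ)
    (hu : ContDiff ℝ (⊤ : ℕ∞) u) (hup : Periodic2 u)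
    (hA1 : ContDiff ℝ (⊤ : ℕ∞) A1) (hA1p : Periodic2 A1)
    (hA2 : ContDiff ℝ (⊤ : ℕ∞) A2) (hA2p : Periodic2 A2)
    (hYMH : IsYMH ε u A1 A2) (hstab : Stable ε u A1 A2)
    (hne : ∃ x, u x ≠ 0) :
    (∀ x, sigP u A1 A2 x = 0 ∧ curv A1 A2 x = hfun ε u x) ∨
    (∀ x, sigM u A1 A2 x = 0 ∧ curv A1 A2 x = -hfun ε u x) := by

  have hε0 : ε ≠ 0 := hε.ne'
  have hi : 0 < 1 / ε ^ 2 := by positivity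
  have sη : ContDiff ℝ (⊤ : ℕ∞) (fun y => curv A1 A2 y + hfun ε u y) :=
    (curv_smooth hA1 hA2).add (hfun_smooth ε hu)
  have sξ : ContDiff ℝ (⊤ : ℕ∞) (fun y => curv A1 A2 y - hfun ε u y) :=
    (curv_smooth hA1 hA2).sub (hfun_smooth ε hu)
  have pη : Periodic2 (fun y => curv A1 A2 y + hfun ε u y) := fun x => by
    simp only [curv_periodic hA1p hA2p x, hfun_periodic ε hup x, and_self]
  have pξ : Periodic2 (fun y => curv A1 A2 y - hfun ε u y) := fun x => by
    simp only [curv_periodic hA1p hA2p x, hfun_periodic ε hup x, and_self]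
  have sP := sigP_smooth hA1 hA2 hu
  have pP := sigP_periodic hA1p hA2p hup
  have hlap := lap_eta hε0 hA1 hA2 hu hYMH
  have hcc : Continuous (fun x => 1 / ε ^ 2 * ‖u x‖ ^ 2) := by
    have := hu.continuous
    fun_prop
  obtain ⟨x0, hx0⟩ := hne
  have hux0 : 0 < ‖u x0‖ ^ 2 := by positivity
  -- nonnegativity
  have hη0 : ∀ x, 0 ≤ curv A1 A2 x + hfun ε u x := by
    obtain ⟨q, hq⟩ := periodic_min pη sη.continuous
    by_contra hcon
    push Not at hcon
    obtain ⟨y, hy⟩ := hcon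
    set m := curv A1 A2 q + hfun ε u q with hm
    have hmneg : m < 0 := lt_of_le_of_lt (hq y) hy
    have sf : ContDiff ℝ (⊤ : ℕ∞) (fun y => (curv A1 A2 y + hfun ε u y) - m) :=
      sη.sub contDiff_const
    have p0 : ∀ e x, pdv e (fun _ : ℝ × ℝ => m) x = 0 := by intro e x; simp [pdv]
    have e1 : pd1 (fun y => (curv A1 A2 y + hfun ε u y) - m)
        = pd1 (fun y => curv A1 A2 y + hfun ε u y) := by
      funext x
      rw [pd1_eq, pd1_eq, pdv_sub _ sη contDiff_const, p0, sub_zero]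
    have e2 : pd2 (fun y => (curv A1 A2 y + hfun ε u y) - m)
        = pd2 (fun y => curv A1 A2 y + hfun ε u y) := by
      funext x
      rw [pd2_eq, pd2_eq, pdv_sub _ sη contDiff_const, p0, sub_zero]
    have hconst : ∀ x, curv A1 A2 x + hfun ε u x = m := by
      intro x
      by_contra hx
      have hpos : 0 < (curv A1 A2 x + hfun ε u x) - m :=
        sub_pos.2 (lt_of_le_of_ne (hq x) (Ne.symm hx))
      have := strong_max (c := fun x => 1 / ε ^ 2 * ‖u x‖ ^ 2) sf hcc
        (fun x => sub_nonneg.2 (hq x)) (fun x => by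
          rw [e1, e2, hlap x]
          have a1 : 0 ≤ 1 / ε ^ 2 * ‖sigM u A1 A2 x‖ ^ 2 := by positivity
          have a2 : 1 / ε ^ 2 * ‖u x‖ ^ 2 * m ≤ 0 :=
            mul_nonpos_of_nonneg_of_nonpos (by positivity) hmneg.le
          linarith) (p := x) hpos q
      simp [hm] at this
    have hz : pd1 (pd1 (fun y => curv A1 A2 y + hfun ε u y)) x0
      + pd2 (pd2 (fun y => curv A1 A2 y + hfun ε u y)) x0 = 0 := by
      have : (fun y => curv A1 A2 y + hfun ε u y) = fun _ => m := funext hconst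
      rw [this]
      exact lap_const m x0
    rw [hlap x0, hconst x0] at hz
    have hz' := (mul_eq_zero.1 hz).resolve_left hi.ne'
    nlinarith [sq_nonneg ‖sigM u A1 A2 x0‖, mul_pos_of_neg_of_neg hmneg (neg_neg_of_pos hux0)]
  -- stability
  have hxi := pd_xi hε0 hA1 hA2 hu hYMH
  have hDM := DM_sigP hA1 hA2 hu hYMH
  have pz : Periodic2 (fun _ : ℝ × ℝ => (0:ℝ)) := fun x => ⟨rfl, rfl⟩
  have sz : ContDiff ℝ (⊤ : ℕ∞) (fun _ : ℝ × ℝ => (0:ℝ)) := contDiff_const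
  have p0 : ∀ e x, pdv e (fun _ : ℝ × ℝ => (0:ℝ)) x = 0 := by intro e x; simp [pdv]
  have V1 := second_var hε0 hA1 hA2 hu hA1p hA2p hup hstab (v := sigP u A1 A2)
    (a1 := fun _ => 0) (a2 := fun y => curv A1 A2 y - hfun ε u y) sz sξ sP pz pξ pP
    (fun x => by
      rw [hDM x]; push_cast
      linear_combination (curv A1 A2 x - hfun ε u x) * u x * Complex.I_sq)
    (fun x => by
      rw [← (hxi x).1]
      simp only [curv, pd1_eq, pd2_eq, p0, sub_zero])
  have V2 := second_var hε0 hA1 hA2 hu hA1p hA2p hup hstab (v := fun y => -I * sigP u A1 A2 y)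
    (a1 := fun y => -(curv A1 A2 y - hfun ε u y)) (a2 := fun _ => 0) sξ.neg sz
    (contDiff_const.mul sP) (fun x => by simp only [pξ x, and_self]) pz
    (fun x => by simp only [pP x, and_self])
    (fun x => by
      have k1 : D1 A1 (fun y => -I * sigP u A1 A2 y) x = -I * D1 A1 (sigP u A1 A2) x := by
        simp only [D1, pd1_eq, pdv_constmulC _ _ sP]; ring
      have k2 : D2 A2 (fun y => -I * sigP u A1 A2 y) x = -I * D2 A2 (sigP u A1 A2) x := by
        simp only [D2, pd2_eq, pdv_constmulC _ _ sP]; ring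
      have := hDM x
      rw [k1, k2]
      push_cast at this ⊢
      linear_combination -I * this)
    (fun x => by
      have := (hxi x).2
      simp only [curv, pd1_eq, pd2_eq, p0, pdv_neg] at this ⊢
      rw [zero_sub, neg_neg, this]
      simp
      ring)
  have hcM := (sigM_smooth hA1 hA2 hu).continuous
  have hcMc := (smooth_conj (sigM_smooth hA1 hA2 hu)).continuous
  have hcP := sP.continuous
  have hcF := (curv_smooth hA1 hA2).continuous
  have hcH := (hfun_smooth ε hu).continuous
  have hsum := add_nonneg V1 V2
  rw [← integral_add] at hsum
  rotate_left
  · apply integrable_sq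
    refine (continuous_const.mul (Complex.continuous_re.comp ?_)).sub ?_ <;> fun_prop
  · apply integrable_sq
    refine (continuous_const.mul (Complex.continuous_re.comp ?_)).sub ?_ <;> fun_prop
  have hzero : ∀ x, (curv A1 A2 x + hfun ε u x) * ‖sigP u A1 A2 x‖ ^ 2 = 0 := by
    apply zero_of_integral
    · intro x
      simp only [curv_periodic hA1p hA2p x, hfun_periodic ε hup x, pP x, and_self]
    · fun_prop
    · intro x
      exact mul_nonneg (hη0 x) (by positivity)
    · have hrw : ∀ x, (2 * ((starRingEnd ℂ) (sigM u A1 A2 x) *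
          (-I * (((0:ℝ):ℂ) - I * ((curv A1 A2 x - hfun ε u x : ℝ) : ℂ)) * sigP u A1 A2 x)).re
          - (curv A1 A2 x + hfun ε u x) * ‖sigP u A1 A2 x‖ ^ 2) +
          (2 * ((starRingEnd ℂ) (sigM u A1 A2 x) *
          (-I * (((-(curv A1 A2 x - hfun ε u x) : ℝ) : ℂ) - I * ((0:ℝ):ℂ))
            * (-I * sigP u A1 A2 x))).re
          - (curv A1 A2 x + hfun ε u x) * ‖-I * sigP u A1 A2 x‖ ^ 2) =
          (-2) * ((curv A1 A2 x + hfun ε u x) * ‖sigP u A1 A2 x‖ ^ 2) := by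
        intro x
        have n1 : ‖-I * sigP u A1 A2 x‖ = ‖sigP u A1 A2 x‖ := by simp
        rw [n1]
        simp
        ring
      simp_rw [hrw] at hsum
      rw [integral_const_mul] at hsum
      linarith
  by_cases hall : ∃ p, 0 < curv A1 A2 p + hfun ε u p
  · left
    obtain ⟨p, hp⟩ := hall
    have hpos : ∀ x, 0 < curv A1 A2 x + hfun ε u x :=
      strong_max (c := fun x => 1 / ε ^ 2 * ‖u x‖ ^ 2) sη hcc hη0 (fun x => by
          rw [hlap x]
          have a1 : 0 ≤ 1 / ε ^ 2 * ‖sigM u A1 A2 x‖ ^ 2 := by positivity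
          linarith) hp
    have hs : ∀ x, sigP u A1 A2 x = 0 := by
      intro x
      have := (mul_eq_zero.1 (hzero x)).resolve_left (hpos x).ne'
      simpa using this
    have hξd : ∀ x, fderiv ℝ (fun y => curv A1 A2 y - hfun ε u y) x = 0 := by
      intro x
      have h1 := (hxi x).1
      have h2 := (hxi x).2
      rw [hs x] at h1 h2
      simp only [mul_zero, Complex.zero_re, Complex.zero_im, mul_eq_zero, pow_eq_zero_iff,
        ne_eq, OfNat.ofNat_ne_zero, not_false_eq_true, hε0, false_or, pd1, pd2] at h1 h2
      ext <;> simp [h1, h2]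
    have hconst := is_const_of_fderiv_eq_zero (smooth_diff sξ) hξd
    have h0 : curv A1 A2 x0 - hfun ε u x0 = 0 := by
      have hs' : sigP u A1 A2 = fun _ => 0 := funext hs
      have := hDM x0
      rw [hs'] at this
      simp only [D1, D2, pd1, pd2] at this
      simp at this
      rcases this with h | h
      · exact_mod_cast h
      · exact absurd h hx0
    intro x
    refine ⟨hs x, ?_⟩
    have := hconst x x0
    linarith
  · right
    push Not at hall
    have hη : ∀ x, curv A1 A2 x + hfun ε u x = 0 := fun x => le_antisymm (hall x) (hη0 x)
    intro x
    constructor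
    · have hz : pd1 (pd1 (fun y => curv A1 A2 y + hfun ε u y)) x
        + pd2 (pd2 (fun y => curv A1 A2 y + hfun ε u y)) x = 0 := by
        have : (fun y => curv A1 A2 y + hfun ε u y) = fun _ => 0 := funext hη
        rw [this]
        exact lap_const 0 x
      rw [hlap x, hη x] at hz
      have hz' := (mul_eq_zero.1 hz).resolve_left hi.ne'
      simpa using hz'
    · linarith [hη x]
end
end

section
/- Second variation formula: for every ε > 0, every periodic configuration (u, A), and all smooth ℤ²-periodic v : ℝ² → ℂ and a = (a₁, a₂) : ℝ² → ℝ², the second derivative at t = 0 of t ↦ E_ε(u + t·v, A + t·a) equals ∫_{[0,1]²} [ 2ε²·(∂₁a₂ − ∂₂a₁)² + 2(|D₁v|² + |D₂v|²) − 4·( a₁·(Re(i·u·conj(D₁v)) + Re(i·v·conj(D₁u))) + a₂·(Re(i·u·conj(D₂v)) + Re(i·v·conj(D₂u))) ) + 2|u|²(a₁² + a₂²) + ((|u|² − 1)/ε²)·|v|² + (2/ε²)·(Re(u·conj(v)))² ]. -/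
open MeasureTheory Complex

noncomputable section

lemma aux_iter (c0 c1 c2 c3 c4 : ℝ × ℝ → ℝ) (h0 : Continuous c0) (h1 : Continuous c1)
    (h2 : Continuous c2) (h3 : Continuous c3) (h4 : Continuous c4) :
    iteratedDeriv 2 (fun t : ℝ => ∫ x in Set.Icc (0:ℝ) 1 ×ˢ Set.Icc (0:ℝ) 1,
      (c0 x + t * c1 x + t ^ 2 * c2 x + t ^ 3 * c3 x + t ^ 4 * c4 x)) 0
      = ∫ x in Set.Icc (0:ℝ) 1 ×ˢ Set.Icc (0:ℝ) 1, 2 * c2 x := by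
  have hK : IsCompact (Set.Icc (0:ℝ) 1 ×ˢ Set.Icc (0:ℝ) 1) := isCompact_Icc.prod isCompact_Icc
  have hI : ∀ f : ℝ × ℝ → ℝ, Continuous f →
      Integrable f (volume.restrict (Set.Icc (0:ℝ) 1 ×ˢ Set.Icc (0:ℝ) 1)) :=
    fun f hf => hf.continuousOn.integrableOn_compact hK
  set μ := (volume : Measure (ℝ × ℝ)).restrict (Set.Icc (0:ℝ) 1 ×ˢ Set.Icc (0:ℝ) 1)
  have e : (fun t : ℝ => ∫ x, (c0 x + t * c1 x + t ^ 2 * c2 x + t ^ 3 * c3 x + t ^ 4 * c4 x) ∂μ)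
      = fun t : ℝ => (∫ x, c0 x ∂μ) + t * (∫ x, c1 x ∂μ) + t ^ 2 * (∫ x, c2 x ∂μ)
        + t ^ 3 * (∫ x, c3 x ∂μ) + t ^ 4 * (∫ x, c4 x ∂μ) := by
    funext t
    rw [integral_add (hI _ (by fun_prop)) (hI _ (by fun_prop)),
      integral_add (hI _ (by fun_prop)) (hI _ (by fun_prop)),
      integral_add (hI _ (by fun_prop)) (hI _ (by fun_prop)),
      integral_add (hI _ (by fun_prop)) (hI _ (by fun_prop))]
    simp only [integral_const_mul]
  rw [e, integral_const_mul]
  generalize (∫ x, c0 x ∂μ) = k0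
  generalize (∫ x, c1 x ∂μ) = k1
  generalize (∫ x, c2 x ∂μ) = k2
  generalize (∫ x, c3 x ∂μ) = k3
  generalize (∫ x, c4 x ∂μ) = k4
  have d1 : deriv (fun t : ℝ => k0 + t * k1 + t ^ 2 * k2 + t ^ 3 * k3 + t ^ 4 * k4)
      = fun t : ℝ => k1 + 2 * t * k2 + 3 * t ^ 2 * k3 + 4 * t ^ 3 * k4 := by
    funext t
    have := (((((hasDerivAt_const t k0).add ((hasDerivAt_id t).mul_const k1)).add
      ((hasDerivAt_pow 2 t).mul_const k2)).add ((hasDerivAt_pow 3 t).mul_const k3)).add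
      ((hasDerivAt_pow 4 t).mul_const k4))
    refine (this.congr_deriv ?_).deriv
    norm_num
  rw [iteratedDeriv_succ, iteratedDeriv_one, d1]
  have := ((((hasDerivAt_const (0:ℝ) k1).add
      (((hasDerivAt_id (0:ℝ)).const_mul 2).mul_const k2)).add
      (((hasDerivAt_pow 2 (0:ℝ)).const_mul 3).mul_const k3)).add
      (((hasDerivAt_pow 3 (0:ℝ)).const_mul 4).mul_const k4))
  refine (this.congr_deriv ?_).deriv
  norm_num

lemma aux_fd {E : Type*} [NormedAddCommGroup E] [NormedSpace ℝ E] (f g : ℝ × ℝ → E)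
    (hf : ContDiff ℝ (⊤ : ℕ∞) f) (hg : ContDiff ℝ (⊤ : ℕ∞) g) (t : ℝ) (x w : ℝ × ℝ) :
    fderiv ℝ (fun y => f y + t • g y) x w = fderiv ℝ f x w + t • fderiv ℝ g x w := by
  have h1 : DifferentiableAt ℝ f x := hf.differentiable (by simp) x
  have h2 : DifferentiableAt ℝ g x := hg.differentiable (by simp) x
  have h3 : fderiv ℝ (fun y => f y + t • g y) x = fderiv ℝ f x + t • fderiv ℝ g x :=
    (h1.hasFDerivAt.add (h2.hasFDerivAt.const_smul t)).fderiv
  rw [h3]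
  rfl

lemma aux_cont {E : Type*} [NormedAddCommGroup E] [NormedSpace ℝ E] (f : ℝ × ℝ → E)
    (hf : ContDiff ℝ (⊤ : ℕ∞) f) (w : ℝ × ℝ) : Continuous (fun x => fderiv ℝ f x w) :=
  (hf.continuous_fderiv (by simp)).clm_apply continuous_const

lemma aux_sq (p q r : ℂ) (t : ℝ) : ‖p + t * q + t ^ 2 * r‖ ^ 2 =
    ‖p‖ ^ 2 + t * (2 * (p * (starRingEnd ℂ) q).re)
      + t ^ 2 * (‖q‖ ^ 2 + 2 * (p * (starRingEnd ℂ) r).re)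
      + t ^ 3 * (2 * (q * (starRingEnd ℂ) r).re) + t ^ 4 * ‖r‖ ^ 2 := by
  have : (t : ℂ) ^ 2 = ((t ^ 2 : ℝ) : ℂ) := by push_cast; rfl
  rw [this]
  simp only [Complex.sq_norm, Complex.normSq_apply, Complex.add_re, Complex.add_im,
    Complex.mul_im, Complex.ofReal_re, Complex.ofReal_im, Complex.mul_re, Complex.conj_re, Complex.conj_im]
  ring

lemma aux_sq1 (p q : ℂ) (t : ℝ) : ‖p + t * q‖ ^ 2 =
    ‖p‖ ^ 2 + t * (2 * (p * (starRingEnd ℂ) q).re) + t ^ 2 * ‖q‖ ^ 2 := by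
  simpa using aux_sq p q 0 t

lemma aux_pt (p dv u v : ℂ) (a : ℝ) :
    2 * (‖dv - I * a * u‖ ^ 2 + 2 * (p * (starRingEnd ℂ) (-(I * a * v))).re)
    = 2 * ‖dv‖ ^ 2 - 4 * (a * ((I * u * (starRingEnd ℂ) dv).re + (I * v * (starRingEnd ℂ) p).re))
      + 2 * ‖u‖ ^ 2 * a ^ 2 := by
  simp [Complex.sq_norm, Complex.normSq_apply]
  ring

/-- Second variation formula for the Yang--Mills--Higgs energy on the flat torus. -/
theorem second_variation_formula
    (ε : ℝ) (hε : 0 < ε) (u : ℝ × ℝ → ℂ) (A1 A2 : ℝ × ℝ → ℝ)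
    (hu : ContDiff ℝ (⊤ : ℕ∞) u) (hup : Periodic2 u)
    (hA1 : ContDiff ℝ (⊤ : ℕ∞) A1) (hA1p : Periodic2 A1)
    (hA2 : ContDiff ℝ (⊤ : ℕ∞) A2) (hA2p : Periodic2 A2)
    (v : ℝ × ℝ → ℂ) (a1 a2 : ℝ × ℝ → ℝ)
    (hv : ContDiff ℝ (⊤ : ℕ∞) v) (hvp : Periodic2 v)
    (ha1 : ContDiff ℝ (⊤ : ℕ∞) a1) (ha1p : Periodic2 a1)
    (ha2 : ContDiff ℝ (⊤ : ℕ∞) a2) (ha2p : Periodic2 a2) :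
    iteratedDeriv 2 (fun t : ℝ =>
        energy ε (fun x => u x + t • v x)
          (fun x => A1 x + t * a1 x) (fun x => A2 x + t * a2 x)) 0 =
      ∫ x in Set.Icc (0:ℝ) 1 ×ˢ Set.Icc (0:ℝ) 1,
        (2 * ε ^ 2 * (pd1 a2 x - pd2 a1 x) ^ 2
          + 2 * (‖D1 A1 v x‖ ^ 2 + ‖D2 A2 v x‖ ^ 2)
          - 4 * (a1 x * ((Complex.I * u x * (starRingEnd ℂ) (D1 A1 v x)).re
                          + (Complex.I * v x * (starRingEnd ℂ) (D1 A1 u x)).re)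
                + a2 x * ((Complex.I * u x * (starRingEnd ℂ) (D2 A2 v x)).re
                          + (Complex.I * v x * (starRingEnd ℂ) (D2 A2 u x)).re))
          + 2 * ‖u x‖ ^ 2 * (a1 x ^ 2 + a2 x ^ 2)
          + (‖u x‖ ^ 2 - 1) / ε ^ 2 * ‖v x‖ ^ 2
          + 2 / ε ^ 2 * (u x * (starRingEnd ℂ) (v x)).re ^ 2) := by
  have cu := hu.continuous
  have cv := hv.continuous
  have cA1 := hA1.continuous
  have cA2 := hA2.continuous
  have ca1 := ha1.continuous
  have ca2 := ha2.continuous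
  have cC : Continuous (curv A1 A2) := (aux_cont A2 hA2 _).sub (aux_cont A1 hA1 _)
  have cc : Continuous (curv a1 a2) := (aux_cont a2 ha2 _).sub (aux_cont a1 ha1 _)
  have cp1 : Continuous (D1 A1 u) := (aux_cont u hu _).sub (by fun_prop)
  have cp2 : Continuous (D2 A2 u) := (aux_cont u hu _).sub (by fun_prop)
  have cq1 : Continuous (D1 A1 v) := (aux_cont v hv _).sub (by fun_prop)
  have cq2 : Continuous (D2 A2 v) := (aux_cont v hv _).sub (by fun_prop)
  have hre : ∀ f g : ℝ × ℝ → ℂ, Continuous f → Continuous g →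
      Continuous fun x => (f x * (starRingEnd ℂ) (g x)).re := fun f g hf hg =>
    Complex.continuous_re.comp (hf.mul (Complex.continuous_conj.comp hg))
  let q1 : ℝ × ℝ → ℂ := fun x => D1 A1 v x - I * a1 x * u x
  let r1 : ℝ × ℝ → ℂ := fun x => -(I * a1 x * v x)
  let q2 : ℝ × ℝ → ℂ := fun x => D2 A2 v x - I * a2 x * u x
  let r2 : ℝ × ℝ → ℂ := fun x => -(I * a2 x * v x)
  have cq1' : Continuous q1 := by fun_prop
  have cr1 : Continuous r1 := by fun_prop
  have cq2' : Continuous q2 := by fun_prop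
  have cr2 : Continuous r2 := by fun_prop
  have k1 := hre _ _ cp1 cq1'
  have k2 := hre _ _ cp1 cr1
  have k3 := hre _ _ cq1' cr1
  have k4 := hre _ _ cp2 cq2'
  have k5 := hre _ _ cp2 cr2
  have k6 := hre _ _ cq2' cr2
  have k7 := hre _ _ cu cv
  let s : ℝ × ℝ → ℝ := fun x => 2 * (u x * (starRingEnd ℂ) (v x)).re
  have cs : Continuous s := continuous_const.mul k7
  have key := aux_iter
    (fun x => ε ^ 2 * curv A1 A2 x ^ 2 + ‖D1 A1 u x‖ ^ 2 + ‖D2 A2 u x‖ ^ 2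
      + (1 - ‖u x‖ ^ 2) ^ 2 / (4 * ε ^ 2))
    (fun x => ε ^ 2 * (2 * curv A1 A2 x * curv a1 a2 x)
      + 2 * (D1 A1 u x * (starRingEnd ℂ) (q1 x)).re + 2 * (D2 A2 u x * (starRingEnd ℂ) (q2 x)).re
      + (-2 * (1 - ‖u x‖ ^ 2) * s x) / (4 * ε ^ 2))
    (fun x => ε ^ 2 * curv a1 a2 x ^ 2
      + (‖q1 x‖ ^ 2 + 2 * (D1 A1 u x * (starRingEnd ℂ) (r1 x)).re)
      + (‖q2 x‖ ^ 2 + 2 * (D2 A2 u x * (starRingEnd ℂ) (r2 x)).re)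
      + (s x ^ 2 - 2 * (1 - ‖u x‖ ^ 2) * ‖v x‖ ^ 2) / (4 * ε ^ 2))
    (fun x => 2 * (q1 x * (starRingEnd ℂ) (r1 x)).re + 2 * (q2 x * (starRingEnd ℂ) (r2 x)).re
      + (2 * s x * ‖v x‖ ^ 2) / (4 * ε ^ 2))
    (fun x => ‖r1 x‖ ^ 2 + ‖r2 x‖ ^ 2 + (‖v x‖ ^ 2) ^ 2 / (4 * ε ^ 2))
    (by fun_prop) (by fun_prop) (by fun_prop) (by fun_prop) (by fun_prop)
  convert key using 2
  · funext t
    unfold energy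
    congr 1
    funext x
    have eC : curv (fun x => A1 x + t * a1 x) (fun x => A2 x + t * a2 x) x
        = curv A1 A2 x + t * curv a1 a2 x := by
      have h1 := aux_fd A2 a2 hA2 ha2 t x (1, 0)
      have h2 := aux_fd A1 a1 hA1 ha1 t x (0, 1)
      simp only [smul_eq_mul] at h1 h2
      simp only [curv, pd1, pd2, h1, h2]
      ring
    have e1 : D1 (fun x => A1 x + t * a1 x) (fun x => u x + t • v x) x
        = D1 A1 u x + t * q1 x + t ^ 2 * r1 x := by
      simp only [q1, r1, D1, pd1, aux_fd u v hu hv]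
      simp only [Complex.real_smul]
      push_cast
      ring
    have e2 : D2 (fun x => A2 x + t * a2 x) (fun x => u x + t • v x) x
        = D2 A2 u x + t * q2 x + t ^ 2 * r2 x := by
      simp only [q2, r2, D2, pd2, aux_fd u v hu hv]
      simp only [Complex.real_smul]
      push_cast
      ring
    rw [eC, e1, e2, aux_sq, aux_sq]
    beta_reduce
    rw [Complex.real_smul, aux_sq1]
    simp only [s]
    ring
  · funext x
    have h1 := aux_pt (D1 A1 u x) (D1 A1 v x) (u x) (v x) (a1 x)
    have h2 := aux_pt (D2 A2 u x) (D2 A2 v x) (u x) (v x) (a2 x)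
    have hc : curv a1 a2 x = pd1 a2 x - pd2 a1 x := rfl
    have h3 : 2 * ((s x ^ 2 - 2 * (1 - ‖u x‖ ^ 2) * ‖v x‖ ^ 2) / (4 * ε ^ 2))
        = (‖u x‖ ^ 2 - 1) / ε ^ 2 * ‖v x‖ ^ 2
          + 2 / ε ^ 2 * (u x * (starRingEnd ℂ) (v x)).re ^ 2 := by
      simp only [s]
      field_simp
      ring
    simp only [q1, r1, q2, r2]
    rw [hc]
    linear_combination -h1 - h2 - h3
end
end

section
/- Identity for the potential function (Proposition 3.4(a), trivialized flat version): if (u, A) is a smooth solution of the YMH equations on U, then pointwise on U one has −(∂₁²h + ∂₂²h) = (1/ε²)(|D₁u|² + |D₂u|²) − (1/ε²)|u|²·h. -/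
open MeasureTheory Complex

noncomputable section

/-- First derivative of `h` in the direction `v`. -/
theorem hfun_dir (ε : ℝ) (hε : 0 < ε) (u : ℝ × ℝ → ℂ) (v x : ℝ × ℝ)
    (hu : DifferentiableAt ℝ u x) :
    fderiv ℝ (hfun ε u) x v =
      -(1 / ε ^ 2) * ((u x).re * (fderiv ℝ u x v).re + (u x).im * (fderiv ℝ u x v).im) := by
  have hre : HasFDerivAt (fun y => (u y).re) (Complex.reCLM.comp (fderiv ℝ u x)) x :=
    Complex.reCLM.hasFDerivAt.comp x hu.hasFDerivAt
  have him : HasFDerivAt (fun y => (u y).im) (Complex.imCLM.comp (fderiv ℝ u x)) x :=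
    Complex.imCLM.hasFDerivAt.comp x hu.hasFDerivAt
  have e : hfun ε u = fun y => (1 - ((u y).re * (u y).re + (u y).im * (u y).im)) *
      (1 / (2 * ε ^ 2)) := by
    funext y
    simp only [hfun, ← Complex.normSq_eq_norm_sq, Complex.normSq_apply]
    ring
  have H := ((((hre.mul hre).add (him.mul him)).const_sub 1).mul_const (1 / (2 * ε ^ 2)))
  have H2 := (congrArg (fun f => fderiv ℝ f x) e).trans H.fderiv
  rw [H2]
  simp
  field_simp
  ring

/-- Second derivative identity in the direction `v`. -/
theorem hfun_dir2 (ε : ℝ) (hε : 0 < ε) (U : Set (ℝ × ℝ)) (hU : IsOpen U)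
    (u : ℝ × ℝ → ℂ) (A : ℝ × ℝ → ℝ) (hu : ContDiffOn ℝ (⊤ : ℕ∞) u U)
    (hA : ContDiffOn ℝ (⊤ : ℕ∞) A U) (v x : ℝ × ℝ) (hx : x ∈ U) (D : ℂ) (DD : ℂ)
    (hD : D = fderiv ℝ u x v - Complex.I * (A x) * u x)
    (hDD : DD = fderiv ℝ (fun y => fderiv ℝ u y v - Complex.I * (A y) * u y) x v
      - Complex.I * (A x) * (fderiv ℝ u x v - Complex.I * (A x) * u x)) :
    fderiv ℝ (fun y => fderiv ℝ (hfun ε u) y v) x v =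
      -(1 / ε ^ 2) * (‖D‖ ^ 2 + ((u x).re * DD.re + (u x).im * DD.im)) := by
  have hd : ∀ y ∈ U, DifferentiableAt ℝ u y := fun y hy =>
    (hu.contDiffAt (hU.mem_nhds hy)).differentiableAt (by simp)
  have hAd : DifferentiableAt ℝ A x :=
    (hA.contDiffAt (hU.mem_nhds hx)).differentiableAt (by simp)
  have hpd : DifferentiableAt ℝ (fun y => fderiv ℝ u y v) x := by
    have h1 : ContDiffAt ℝ 1 (fderiv ℝ u) x :=
      (hu.contDiffAt (hU.mem_nhds hx)).fderiv_right (by norm_cast)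
    exact (h1.differentiableAt (by simp)).clm_apply (differentiableAt_const v)
  have e : (fun y => fderiv ℝ (hfun ε u) y v) =ᶠ[nhds x] fun y => -(1 / ε ^ 2) *
      ((u y).re * (fderiv ℝ u y v).re + (u y).im * (fderiv ℝ u y v).im) := by
    filter_upwards [hU.mem_nhds hx] with y hy
    exact hfun_dir ε hε u v y (hd y hy)
  have hux := (hd x hx).hasFDerivAt
  have hre : HasFDerivAt (fun y => (u y).re) (Complex.reCLM.comp (fderiv ℝ u x)) x :=
    Complex.reCLM.hasFDerivAt.comp x hux
  have him : HasFDerivAt (fun y => (u y).im) (Complex.imCLM.comp (fderiv ℝ u x)) x :=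
    Complex.imCLM.hasFDerivAt.comp x hux
  have hre2 : HasFDerivAt (fun y => (fderiv ℝ u y v).re) 
      (Complex.reCLM.comp (fderiv ℝ (fun y => fderiv ℝ u y v) x)) x :=
    Complex.reCLM.hasFDerivAt.comp x hpd.hasFDerivAt
  have him2 : HasFDerivAt (fun y => (fderiv ℝ u y v).im) 
      (Complex.imCLM.comp (fderiv ℝ (fun y => fderiv ℝ u y v) x)) x :=
    Complex.imCLM.hasFDerivAt.comp x hpd.hasFDerivAt
  have hAc : HasFDerivAt (fun y => (A y : ℂ)) (Complex.ofRealCLM.comp (fderiv ℝ A x)) x :=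
    Complex.ofRealCLM.hasFDerivAt.comp x hAd.hasFDerivAt
  have H1 := ((hre.mul hre2).add (him.mul him2)).const_mul (-(1 / ε ^ 2))
  have H2 := hpd.hasFDerivAt.sub ((hAc.const_mul Complex.I).mul hux)
  have H1' := e.fderiv_eq.trans H1.fderiv
  have H2' : fderiv ℝ (fun y => fderiv ℝ u y v - Complex.I * (A y) * u y) x = _ := H2.fderiv
  rw [H1']
  rw [H2'] at hDD
  rw [hDD, hD, ← Complex.normSq_eq_norm_sq, Complex.normSq_apply]
  simp
  ring

/-- Identity for the potential function `h` (Proposition 3.4(a), trivialized flat version). -/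
theorem laplacian_h_identity
    (ε : ℝ) (hε : 0 < ε) (U : Set (ℝ × ℝ)) (hU : IsOpen U)
    (u : ℝ × ℝ → ℂ) (A1 A2 : ℝ × ℝ → ℝ)
    (hu : ContDiffOn ℝ (⊤ : ℕ∞) u U) (hA1 : ContDiffOn ℝ (⊤ : ℕ∞) A1 U) (hA2 : ContDiffOn ℝ (⊤ : ℕ∞) A2 U)
    (hYMH : IsYMHOn ε u A1 A2 U) :
    ∀ x ∈ U,
      -(pd1 (pd1 (hfun ε u)) x + pd2 (pd2 (hfun ε u)) x) =
        1 / ε ^ 2 * (‖D1 A1 u x‖ ^ 2 + ‖D2 A2 u x‖ ^ 2)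
          - 1 / ε ^ 2 * ‖u x‖ ^ 2 * hfun ε u x := by
  intro x hx
  have h1 := hfun_dir2 ε hε U hU u A1 hu hA1 (1, 0) x hx (D1 A1 u x) (D1 A1 (D1 A1 u) x) rfl rfl
  have h2 := hfun_dir2 ε hε U hU u A2 hu hA2 (0, 1) x hx (D2 A2 u x) (D2 A2 (D2 A2 u) x) rfl rfl
  have h3 := hYMH.1 x hx
  have hr := congrArg Complex.re h3
  have hi := congrArg Complex.im h3
  simp at hr hi
  change -(fderiv ℝ (fun y => fderiv ℝ (hfun ε u) y (1, 0)) x (1, 0)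
    + fderiv ℝ (fun y => fderiv ℝ (hfun ε u) y (0, 1)) x (0, 1)) = _
  rw [h1, h2]
  have hn : ‖u x‖ ^ 2 = (u x).re * (u x).re + (u x).im * (u x).im := by
    rw [← Complex.normSq_eq_norm_sq, Complex.normSq_apply]
  rw [hn]
  linear_combination (-(1 / ε ^ 2) * (u x).re) * hr + (-(1 / ε ^ 2) * (u x).im) * hi
end
end

section
/- Identity for the curvature function (Proposition 3.4(b), trivialized flat version): if (u, A) is a smooth solution of the YMH equations on U, then pointwise on U one has −(∂₁²F + ∂₂²F) = (2/ε²)·Re(i·D₁u·conj(D₂u)) − (1/ε²)|u|²·F. -/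
open MeasureTheory Complex

noncomputable section

theorem aux_smul (f : ℝ × ℝ → ℝ) (c : ℝ) (x : ℝ × ℝ) :
    fderiv ℝ (fun y => c • f y) x = c • fderiv ℝ f x :=
  congrFun (fderiv_const_smul_field (𝕜 := ℝ) (f := f) c) x

theorem aux_fderiv (u p : ℝ × ℝ → ℂ) (A : ℝ × ℝ → ℝ) (x v : ℝ × ℝ)
    (hu : DifferentiableAt ℝ u x) (hp : DifferentiableAt ℝ p x) (hA : DifferentiableAt ℝ A x) :
    fderiv ℝ (fun y => ((starRingEnd ℂ) (u y) * (p y - Complex.I * (A y) * u y)).im) x v =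
      ((starRingEnd ℂ) (fderiv ℝ u x v) * (p x - Complex.I * (A x) * u x)
        + (starRingEnd ℂ) (u x) * (fderiv ℝ p x v - Complex.I * (fderiv ℝ A x v : ℝ) * u x
          - Complex.I * (A x) * fderiv ℝ u x v)).im := by
  have h1 := hu.hasFDerivAt
  have h2 := hp.hasFDerivAt
  have h3 : HasFDerivAt (fun y => ((A y : ℝ) : ℂ)) (Complex.ofRealCLM.comp (fderiv ℝ A x)) x :=
    Complex.ofRealCLM.hasFDerivAt.comp x hA.hasFDerivAt
  have h4 : HasFDerivAt (fun y => (starRingEnd ℂ) (u y))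
      ((Complex.conjCLE : ℂ →L[ℝ] ℂ).comp (fderiv ℝ u x)) x :=
    (Complex.conjCLE : ℂ →L[ℝ] ℂ).hasFDerivAt.comp x h1
  have h5 := h4.mul (h2.sub ((h3.const_mul Complex.I).mul h1))
  have h6 := Complex.imCLM.hasFDerivAt.comp x h5
  have h7 : fderiv ℝ (fun y => ((starRingEnd ℂ) (u y) * (p y - Complex.I * (A y) * u y)).im) x
    = _ := h6.fderiv
  rw [h7]
  simp
  ring

theorem aux_symm (u : ℝ × ℝ → ℂ) (x : ℝ × ℝ) (hu : ContDiffAt ℝ (⊤ : ℕ∞) u x) :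
    fderiv ℝ (pd2 u) x (1, 0) = fderiv ℝ (pd1 u) x (0, 1) ∧
    DifferentiableAt ℝ (pd1 u) x ∧ DifferentiableAt ℝ (pd2 u) x := by
  have hu2 : ContDiffAt ℝ 2 u x := contDiffAt_infty.1 hu 2
  have hs : IsSymmSndFDerivAt ℝ u x := hu2.isSymmSndFDerivAt (by simp)
  have hd : DifferentiableAt ℝ (fderiv ℝ u) x :=
    (hu2.fderiv_right (m := 1) (by norm_num)).differentiableAt (by simp)
  have e : ∀ w : ℝ × ℝ, HasFDerivAt (fun y => fderiv ℝ u y w)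
      ((fderiv ℝ (fderiv ℝ u) x).flip w) x := fun w => by
    simpa using hd.hasFDerivAt.clm_apply (hasFDerivAt_const w x)
  have e1 : HasFDerivAt (pd1 u) _ x := e (1, 0)
  have e2 : HasFDerivAt (pd2 u) _ x := e (0, 1)
  refine ⟨?_, e1.differentiableAt, e2.differentiableAt⟩
  rw [e1.fderiv, e2.fderiv]
  exact hs (1, 0) (0, 1)

/-- Identity for the curvature function `F` (Proposition 3.4(b), trivialized flat version). -/
theorem laplacian_F_identity
    (ε : ℝ) (hε : 0 < ε) (U : Set (ℝ × ℝ)) (hU : IsOpen U)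
    (u : ℝ × ℝ → ℂ) (A1 A2 : ℝ × ℝ → ℝ)
    (hu : ContDiffOn ℝ (⊤ : ℕ∞) u U) (hA1 : ContDiffOn ℝ (⊤ : ℕ∞) A1 U) (hA2 : ContDiffOn ℝ (⊤ : ℕ∞) A2 U)
    (hYMH : IsYMHOn ε u A1 A2 U) :
    ∀ x ∈ U,
      -(pd1 (pd1 (curv A1 A2)) x + pd2 (pd2 (curv A1 A2)) x) =
        2 / ε ^ 2 * (Complex.I * D1 A1 u x * (starRingEnd ℂ) (D2 A2 u x)).re
          - 1 / ε ^ 2 * ‖u x‖ ^ 2 * curv A1 A2 x := by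
  intro x hx
  obtain ⟨-, h2, h1⟩ := hYMH
  have hn := hU.mem_nhds hx
  have hux := hu.contDiffAt hn
  have hne : ε ^ 2 ≠ 0 := by positivity
  obtain ⟨hs, hd1, hd2⟩ := aux_symm u x hux
  have du := hux.differentiableAt (by simp)
  have dA1 := (hA1.contDiffAt hn).differentiableAt (by simp)
  have dA2 := (hA2.contDiffAt hn).differentiableAt (by simp)
  have k1 := aux_fderiv u (pd2 u) A2 x (1, 0) du hd2 dA2
  have k2 := aux_fderiv u (pd1 u) A1 x (0, 1) du hd1 dA1
  have g1 : pd1 (curv A1 A2) =ᶠ[nhds x] fun y => (-(1 / ε ^ 2)) •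
      ((starRingEnd ℂ) (u y) * (pd2 u y - Complex.I * (A2 y) * u y)).im := by
    filter_upwards [hn] with y hy
    have := h1 y hy
    simp only [D2] at this
    rw [smul_eq_mul]; field_simp; linarith
  have g2 : pd2 (curv A1 A2) =ᶠ[nhds x] fun y => (1 / ε ^ 2) •
      ((starRingEnd ℂ) (u y) * (pd1 u y - Complex.I * (A1 y) * u y)).im := by
    filter_upwards [hn] with y hy
    have := h2 y hy
    simp only [D1] at this
    rw [smul_eq_mul]; field_simp; linarith
  have r1 : pd1 (pd1 (curv A1 A2)) x = _ := congrArg (fun L : ℝ × ℝ →L[ℝ] ℝ => L (1, 0)) g1.fderiv_eq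
  have r2 : pd2 (pd2 (curv A1 A2)) x = _ := congrArg (fun L : ℝ × ℝ →L[ℝ] ℝ => L (0, 1)) g2.fderiv_eq
  rw [aux_smul] at r1 r2
  simp only [_root_.smul_apply] at r1 r2
  rw [k1] at r1
  rw [k2, ← hs] at r2
  rw [r1, r2, Complex.sq_norm, Complex.normSq_apply]
  simp only [curv, D1, D2]
  simp only [pd1, pd2, smul_eq_mul]
  field_simp
  simp
  ring
end
end

section
/- Identity for the covariant derivative of a solution (Proposition 3.4(c), trivialized flat version): if (u, A) is a smooth solution of the YMH equations on U, then pointwise on U one has −D₁(D₁D₁u + D₂D₂u) + D₂(−i·F·u) = −(1/ε²)·(D₁u·conj(u))·u − i·F·D₂u + h·D₁u and −D₂(D₁D₁u + D₂D₂u) + D₁(i·F·u) = −(1/ε²)·(D₂u·conj(u))·u + i·F·D₁u + h·D₂u. (The left-hand sides are the components of the twisted Hodge Laplacian Δ_A applied to the 1-form d_Au = (D₁u, D₂u).) -/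
open MeasureTheory Complex

noncomputable section

theorem aux_fderiv_mul (g : ℝ × ℝ → ℝ) (f : ℝ × ℝ → ℂ) (x v : ℝ × ℝ) (c : ℂ)
    (hg : DifferentiableAt ℝ g x) (hf : DifferentiableAt ℝ f x) :
    fderiv ℝ (fun y => c * (g y : ℂ) * f y) x v
      = c * ((fderiv ℝ g x v : ℝ) : ℂ) * f x + c * (g x : ℂ) * fderiv ℝ f x v := by
  have h := ((hg.hasFDerivAt.smul hf.hasFDerivAt).const_mul c)
  have e : (fun y => c * (g y : ℂ) * f y) = fun y => c * (g • f) y := by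
    funext y
    simp [mul_assoc]
  rw [e, h.fderiv]
  simp
  ring

theorem aux_fderiv_h (ε : ℝ) (hε : 0 < ε) (u : ℝ × ℝ → ℂ) (x v : ℝ × ℝ)
    (hu : DifferentiableAt ℝ u x) :
    DifferentiableAt ℝ (hfun ε u) x ∧
    fderiv ℝ (hfun ε u) x v = -((starRingEnd ℂ) (u x) * fderiv ℝ u x v).re / ε ^ 2 := by
  have h := ((hu.hasFDerivAt.norm_sq).const_sub 1).mul_const ((2 * ε ^ 2)⁻¹)
  have e : hfun ε u = fun y => (1 - ‖u y‖ ^ 2) * (2 * ε ^ 2)⁻¹ := by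
    funext y
    simp [hfun, div_eq_mul_inv]
  rw [e]
  refine ⟨h.differentiableAt, ?_⟩
  rw [h.fderiv]
  simp [Complex.inner]
  field_simp
  ring

theorem aux_curv_diff (U : Set (ℝ × ℝ)) (hU : IsOpen U) (A1 A2 : ℝ × ℝ → ℝ)
    (hA1 : ContDiffOn ℝ (⊤ : ℕ∞) A1 U) (hA2 : ContDiffOn ℝ (⊤ : ℕ∞) A2 U)
    (x : ℝ × ℝ) (hx : x ∈ U) : DifferentiableAt ℝ (curv A1 A2) x := by
  have key : ∀ A : ℝ × ℝ → ℝ, ContDiffOn ℝ (⊤ : ℕ∞) A U → DifferentiableAt ℝ (fderiv ℝ A) x := by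
    intro A hA
    have h1 : ContDiffAt ℝ (⊤ : ℕ∞) A x := hA.contDiffAt (hU.mem_nhds hx)
    have h2 : ContDiffAt ℝ 1 (fderiv ℝ A) x := h1.fderiv_right (by
      have : ((2 : ℕ∞) : WithTop ℕ∞) ≤ ((⊤ : ℕ∞) : WithTop ℕ∞) := WithTop.coe_le_coe.2 le_top
      exact le_trans (le_of_eq (by norm_num)) this)
    exact h2.differentiableAt (by simp)
  have h1 := key A1 hA1
  have h2 := key A2 hA2
  exact (h2.clm_apply (differentiableAt_const ((1 : ℝ), (0 : ℝ)))).sub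
    (h1.clm_apply (differentiableAt_const ((0 : ℝ), (1 : ℝ))))

/-- Identity for the covariant derivative of a solution (Proposition 3.4(c),
trivialized flat version): the twisted Hodge Laplacian applied to `d_Au = (D₁u, D₂u)`. -/
theorem twisted_laplacian_of_dAu
    (ε : ℝ) (hε : 0 < ε) (U : Set (ℝ × ℝ)) (hU : IsOpen U)
    (u : ℝ × ℝ → ℂ) (A1 A2 : ℝ × ℝ → ℝ)
    (hu : ContDiffOn ℝ (⊤ : ℕ∞) u U) (hA1 : ContDiffOn ℝ (⊤ : ℕ∞) A1 U) (hA2 : ContDiffOn ℝ (⊤ : ℕ∞) A2 U)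
    (hYMH : IsYMHOn ε u A1 A2 U) :
    ∀ x ∈ U,
      (-(D1 A1 (fun y => D1 A1 (D1 A1 u) y + D2 A2 (D2 A2 u) y) x)
          + D2 A2 (fun y => -(Complex.I * curv A1 A2 y * u y)) x =
        -(1 / (ε : ℂ) ^ 2) * (D1 A1 u x * (starRingEnd ℂ) (u x)) * u x
          - Complex.I * curv A1 A2 x * D2 A2 u x + (hfun ε u x : ℂ) * D1 A1 u x) ∧
      (-(D2 A2 (fun y => D1 A1 (D1 A1 u) y + D2 A2 (D2 A2 u) y) x)
          + D1 A1 (fun y => Complex.I * curv A1 A2 y * u y) x =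
        -(1 / (ε : ℂ) ^ 2) * (D2 A2 u x * (starRingEnd ℂ) (u x)) * u x
          + Complex.I * curv A1 A2 x * D1 A1 u x + (hfun ε u x : ℂ) * D2 A2 u x) := by
  intro x hx
  obtain ⟨h1, h2, h3⟩ := hYMH
  have hud : DifferentiableAt ℝ u x :=
    (hu.contDiffAt (hU.mem_nhds hx)).differentiableAt (by simp)
  have hF := aux_curv_diff U hU A1 A2 hA1 hA2 x hx
  have hh := fun v => aux_fderiv_h ε hε u x v hud
  have hev : (fun y => D1 A1 (D1 A1 u) y + D2 A2 (D2 A2 u) y) =ᶠ[nhds x]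
      fun y => (-1 : ℂ) * (hfun ε u y : ℂ) * u y := by
    filter_upwards [hU.mem_nhds hx] with y hy
    rw [mul_assoc, ← h1 y hy]
    ring
  have hneg : (fun y => -(Complex.I * curv A1 A2 y * u y)) =
      fun y => (-Complex.I) * (curv A1 A2 y : ℂ) * u y := by
    funext y
    ring
  have hεc1 : (ε : ℂ) ≠ 0 := by exact_mod_cast hε.ne'
  have hεc : (ε : ℂ) ^ 2 ≠ 0 := pow_ne_zero 2 (by exact_mod_cast hε.ne')
  have k2 := h2 x hx
  have k3 := h3 x hx
  have hr : ∀ (a : ℝ) (z w : ℂ), ((starRingEnd ℂ) z * (w - Complex.I * a * z)).re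
      = ((starRingEnd ℂ) z * w).re := by
    intro a z w
    simp
    ring
  have hz : ∀ z : ℂ, (z.re : ℂ) + z.im * Complex.I = z := Complex.re_add_im
  constructor
  · have e0 := hev.eq_of_nhds
    have k2c : (ε : ℂ) ^ 2 * ((pd2 (curv A1 A2) x : ℝ) : ℂ)
        = (((starRingEnd ℂ) (u x) * D1 A1 u x).im : ℂ) := by exact_mod_cast k2
    have hrr : (fderiv ℝ (hfun ε u) x (1, 0) : ℝ)
        = -((starRingEnd ℂ) (u x) * D1 A1 u x).re / ε ^ 2 := by
      rw [(hh (1, 0)).2, D1, hr, pd1]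
    have hzz := hz ((starRingEnd ℂ) (u x) * D1 A1 u x)
    have hq : (ε : ℂ) ^ 2 * ((fderiv ℝ (hfun ε u) x (1, 0) : ℝ) : ℂ)
        = -(((starRingEnd ℂ) (u x) * D1 A1 u x).re : ℂ) := by
      rw [hrr]; push_cast; field_simp
    have L1 : D1 A1 (fun y => D1 A1 (D1 A1 u) y + D2 A2 (D2 A2 u) y) x
        = -((fderiv ℝ (hfun ε u) x (1, 0) : ℝ) : ℂ) * u x - hfun ε u x * D1 A1 u x := by
      rw [D1, pd1, hev.fderiv_eq, e0, aux_fderiv_mul _ _ _ _ _ (hh 0).1 hud, D1.eq_1 A1 u, pd1]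
      ring
    have L2 : D2 A2 (fun y => -(Complex.I * curv A1 A2 y * u y)) x
        = -Complex.I * ((pd2 (curv A1 A2) x : ℝ) : ℂ) * u x
          - Complex.I * curv A1 A2 x * D2 A2 u x := by
      rw [hneg, D2, pd2, aux_fderiv_mul _ _ _ _ _ hF hud, D2, pd2, pd2]
      ring
    rw [L1, L2]
    apply mul_left_cancel₀ hεc
    have hc : (ε : ℂ) ^ 2 * (1 / (ε : ℂ) ^ 2) = 1 := by field_simp
    linear_combination u x * hq - Complex.I * u x * k2c - u x * hzz
      + (D1 A1 u x * (starRingEnd ℂ) (u x)) * u x * hc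
  · have e0 := hev.eq_of_nhds
    have k3c : (ε : ℂ) ^ 2 * ((pd1 (curv A1 A2) x : ℝ) : ℂ)
        = -(((starRingEnd ℂ) (u x) * D2 A2 u x).im : ℂ) := by exact_mod_cast k3
    have hrr : (fderiv ℝ (hfun ε u) x (0, 1) : ℝ)
        = -((starRingEnd ℂ) (u x) * D2 A2 u x).re / ε ^ 2 := by
      rw [(hh (0, 1)).2, D2, hr, pd2]
    have hzz := hz ((starRingEnd ℂ) (u x) * D2 A2 u x)
    have hq : (ε : ℂ) ^ 2 * ((fderiv ℝ (hfun ε u) x (0, 1) : ℝ) : ℂ)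
        = -(((starRingEnd ℂ) (u x) * D2 A2 u x).re : ℂ) := by
      rw [hrr]; push_cast; field_simp
    have L1 : D2 A2 (fun y => D1 A1 (D1 A1 u) y + D2 A2 (D2 A2 u) y) x
        = -((fderiv ℝ (hfun ε u) x (0, 1) : ℝ) : ℂ) * u x - hfun ε u x * D2 A2 u x := by
      rw [D2, pd2, hev.fderiv_eq, e0, aux_fderiv_mul _ _ _ _ _ (hh 0).1 hud, D2.eq_1 A2 u, pd2]
      ring
    have L2 : D1 A1 (fun y => Complex.I * curv A1 A2 y * u y) x
        = Complex.I * ((pd1 (curv A1 A2) x : ℝ) : ℂ) * u x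
          + Complex.I * curv A1 A2 x * D1 A1 u x := by
      rw [D1, pd1, aux_fderiv_mul _ _ _ _ _ hF hud, D1, pd1, pd1]
      ring
    rw [L1, L2]
    apply mul_left_cancel₀ hεc
    have hc : (ε : ℂ) ^ 2 * (1 / (ε : ℂ) ^ 2) = 1 := by field_simp
    linear_combination u x * hq + Complex.I * u x * k3c - u x * hzz
      + (D2 A2 u x * (starRingEnd ℂ) (u x)) * u x * hc
end
end

section
/- Coderivative identity (Proposition 3.4(d), trivialized flat version): if (u, A) is a smooth solution of the YMH equations on U, then pointwise on U one has ∂₁(F − h) = (1/ε²)·Re(conj(u)·σ₊) and ∂₂(F − h) = (1/ε²)·Im(conj(u)·σ₊). -/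
open MeasureTheory Complex

noncomputable section

/-- Coderivative identity (Proposition 3.4(d), trivialized flat version). -/
theorem coderivative_identity
    (ε : ℝ) (hε : 0 < ε) (U : Set (ℝ × ℝ)) (hU : IsOpen U)
    (u : ℝ × ℝ → ℂ) (A1 A2 : ℝ × ℝ → ℝ)
    (hu : ContDiffOn ℝ (⊤ : ℕ∞) u U) (hA1 : ContDiffOn ℝ (⊤ : ℕ∞) A1 U) (hA2 : ContDiffOn ℝ (⊤ : ℕ∞) A2 U)
    (hYMH : IsYMHOn ε u A1 A2 U) :
    ∀ x ∈ U,
      pd1 (fun y => curv A1 A2 y - hfun ε u y) x =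
        1 / ε ^ 2 * ((starRingEnd ℂ) (u x) * sigP u A1 A2 x).re ∧
      pd2 (fun y => curv A1 A2 y - hfun ε u y) x =
        1 / ε ^ 2 * ((starRingEnd ℂ) (u x) * sigP u A1 A2 x).im := by
  intro x hx
  have hmem : U ∈ nhds x := hU.mem_nhds hx
  have hux : ContDiffAt ℝ (⊤ : ℕ∞) u x := hu.contDiffAt hmem
  have hud : DifferentiableAt ℝ u x := hux.differentiableAt (by simp)
  have key : ∀ A : ℝ × ℝ → ℝ, ContDiffOn ℝ (⊤ : ℕ∞) A U → ∀ v : ℝ × ℝ,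
      DifferentiableAt ℝ (fun y => fderiv ℝ A y v) x := by
    intro A hA v
    have h1 : ContDiffAt ℝ 1 (fderiv ℝ A) x :=
      (hA.contDiffAt hmem).fderiv_right (m := 1) (by
        have h : ((2 : ℕ∞) : WithTop ℕ∞) ≤ ((⊤ : ℕ∞) : WithTop ℕ∞) := WithTop.coe_le_coe.2 le_top
        rw [one_add_one_eq_two]; exact h)
    exact (h1.differentiableAt (by simp)).clm_apply (differentiableAt_const v)
  have hF : DifferentiableAt ℝ (curv A1 A2) x :=
    (key A2 hA2 (1, 0)).sub (key A1 hA1 (0, 1))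
  have hh : HasFDerivAt (hfun ε u)
      ((2 * ε ^ 2)⁻¹ • (-(2 • (innerSL ℝ (u x)).comp (fderiv ℝ u x)) : ℝ × ℝ →L[ℝ] ℝ)) x := by
    have := ((hud.hasFDerivAt.norm_sq).const_sub 1).mul_const ((2 * ε ^ 2)⁻¹)
    exact this
  have hsub := hF.hasFDerivAt.sub hh
  have e : fderiv ℝ (fun y => curv A1 A2 y - hfun ε u y) x = _ := hsub.fderiv
  obtain ⟨-, h2, h1⟩ := hYMH
  have h1 := h1 x hx
  have h2 := h2 x hx
  have hε' : ε ≠ 0 := hε.ne'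
  unfold pd1 at h1
  unfold pd2 at h2
  constructor
  · have h1' : fderiv ℝ (curv A1 A2) x (1, 0)
        = 1 / ε ^ 2 * -((starRingEnd ℂ) (u x) * D2 A2 u x).im := by
      rw [← h1]; field_simp
    unfold pd1
    rw [e]
    simp [h1', sigP, D1, D2, pd1, pd2, Complex.inner]
    field_simp
    ring
  · have h2' : fderiv ℝ (curv A1 A2) x (0, 1)
        = 1 / ε ^ 2 * ((starRingEnd ℂ) (u x) * D1 A1 u x).im := by
      rw [← h2]; field_simp
    unfold pd2
    rw [e]
    simp [h2', sigP, D1, D2, pd1, pd2, Complex.inner]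
    field_simp
    ring
end
end
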